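/- arXiv:1905.10512 — 3 statements merged into one kernel-verified Lean document; each statement's English description precedes it below -/
import Mathlib

section
/- Let G be a nilpotent permutation group of degree n (i.e., a nilpotent subgroup of the symmetric group on n points) and let p be the smallest prime divisor of |G|. Then |G| ≤ (p^(1/(p-1)))^(n-1). -/
/-!
The induction on `|G|` runs over faithful actions of finite nilpotent groups on `X`, with the number
`k` of orbits in place of `1`. Unless `G` is trivial, some point has a proper stabilizer, and
nilpotency places it inside a proper normal subgroup `M`. The `G`-orbit of that point contains at
least `q = [G : M]` orbits of `M`, so `M` has at least `k + q - 1` orbits, whence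
`|G| = |M| * q ≤ b ^ (|X| - k - (q - 1)) * q` with `b = p ^ (1 / (p - 1))`. Finally
`q ≤ b ^ (q - 1)` by Bernoulli's inequality, because `p ≤ q`.
-/

open MulAction

section OrbitCounting

theorem card_add_ncard_fiber_le {α β : Type*} [Finite α] {f : α → β}
    (hf : Function.Surjective f) (b : β) :
    Nat.card β + (f ⁻¹' {b}).ncard ≤ Nat.card α + 1 := by
  have := Finite.of_surjective f hf
  have hcompl : ({b}ᶜ : Set β).ncard ≤ (f ⁻¹' {b})ᶜ.ncard := by
    calc ({b}ᶜ : Set β).ncard = (f '' (f ⁻¹' {b}ᶜ)).ncard := by rw [Set.image_preimage_eq _ hf]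
      _ ≤ (f ⁻¹' {b})ᶜ.ncard := Set.ncard_image_le
  have hβ := Set.ncard_add_ncard_compl {b}
  have hα := Set.ncard_add_ncard_compl (f ⁻¹' {b})
  rw [Set.ncard_singleton] at hβ
  omega

variable {G X : Type*} [Group G] [MulAction G X]

theorem inv_mul_mem_of_smul_mem_orbit_smul {M : Subgroup G} [M.Normal] {x : X}
    (hx : stabilizer G x ≤ M) {g h : G} (hgh : g • x ∈ orbit M (h • x)) : g⁻¹ * h ∈ M := by
  obtain ⟨m, hm⟩ := hgh
  have hstab : g⁻¹ * (m * h) ∈ M := hx <| by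
    rw [mem_stabilizer_iff, mul_smul, mul_smul, inv_smul_eq_iff]
    exact hm
  have hconj : h⁻¹ * (m : G)⁻¹ * h ∈ M := by
    simpa only [inv_inv] using ‹M.Normal›.conj_mem _ (M.inv_mem m.2) h⁻¹
  simpa [mul_assoc] using M.mul_mem hstab hconj

theorem card_orbits_add_index_le {M : Subgroup G} [M.Normal] [Finite (orbitRel.Quotient M X)]
    {x : X} (hx : stabilizer G x ≤ M) :
    Nat.card (orbitRel.Quotient G X) + M.index ≤ Nat.card (orbitRel.Quotient M X) + 1 := by
  let π : orbitRel.Quotient M X → orbitRel.Quotient G X :=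
    Quotient.map' id fun _ _ h => orbitRel_subgroup_le M h
  have hπ : Function.Surjective π :=
    Quotient.mk''_surjective.forall.2 fun y => ⟨Quotient.mk'' y, rfl⟩
  let orbitOfCoset (a : G ⧸ M) : π ⁻¹' {Quotient.mk'' x} :=
    ⟨Quotient.mk'' (a.out • x), Quotient.sound' (orbitRel_apply.2 (mem_orbit x a.out))⟩
  have hinj : Function.Injective orbitOfCoset := fun a b hab => by
    have hmem : a.out • x ∈ orbit M (b.out • x) :=
      orbitRel_apply.1 (Quotient.eq''.1 (congrArg Subtype.val hab))
    rw [← QuotientGroup.out_eq' a, ← QuotientGroup.out_eq' b, QuotientGroup.eq]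
    exact inv_mul_mem_of_smul_mem_orbit_smul hx hmem
  have hfiber : M.index ≤ (π ⁻¹' {Quotient.mk'' x}).ncard :=
    Nat.card_le_card_of_injective orbitOfCoset hinj
  exact (Nat.add_le_add_left hfiber _).trans (card_add_ncard_fiber_le hπ _)

variable (G X)

theorem card_orbits_le_card [Finite X] : Nat.card (orbitRel.Quotient G X) ≤ Nat.card X :=
  Nat.card_le_card_of_surjective _ Quotient.mk''_surjective

theorem card_sub_card_orbits_le [Finite X] :
    Nat.card X - Nat.card (orbitRel.Quotient G X) ≤ Nat.card X - 1 := by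
  cases isEmpty_or_nonempty X
  · simp
  · have : Nonempty (orbitRel.Quotient G X) := .map Quotient.mk'' ‹_›
    exact Nat.sub_le_sub_left Nat.card_pos _

theorem exists_stabilizer_ne_top [Nontrivial G] [FaithfulSMul G X] :
    ∃ x : X, stabilizer G x ≠ ⊤ := by
  by_contra! hfix
  obtain ⟨g, hg⟩ := exists_ne (1 : G)
  refine hg (FaithfulSMul.eq_of_smul_eq_smul fun x : X => ?_)
  rw [one_smul, ← mem_stabilizer_iff, hfix x]
  exact Subgroup.mem_top g

end OrbitCounting

theorem exists_normal_ge_of_ne_top {G : Type*} [Group G] [IsCoatomic (Subgroup G)]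
    (hG : NormalizerCondition G) {H : Subgroup G} (hH : H ≠ ⊤) :
    ∃ M : Subgroup G, M.Normal ∧ M ≠ ⊤ ∧ H ≤ M := by
  obtain ⟨M, hM, hHM⟩ := (eq_top_or_exists_le_coatom H).resolve_left hH
  exact ⟨M, Subgroup.NormalizerCondition.normal_of_coatom M hG hM, hM.ne_top, hHM⟩

theorem one_le_rpow_one_div_sub_one {p : ℝ} (hp : 1 ≤ p) : 1 ≤ p ^ (1 / (p - 1)) :=
  Real.one_le_rpow hp (one_div_nonneg.2 (sub_nonneg.2 hp))

theorem le_rpow_one_div_sub_one_pow {p : ℝ} (hp : 1 < p) {d : ℕ} (hpd : p ≤ d) :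
    (d : ℝ) ≤ (p ^ (1 / (p - 1))) ^ (d - 1) := by
  have hpos : 0 < p - 1 := sub_pos.2 hp
  have hd : 1 ≤ d := by exact_mod_cast hp.le.trans hpd
  calc (d : ℝ) = 1 + (d - 1) / (p - 1) * (p - 1) := by field_simp; ring
    _ ≤ (1 + (p - 1)) ^ (((d : ℝ) - 1) / (p - 1)) :=
      one_add_mul_self_le_rpow_one_add (by linarith) ((one_le_div hpos).2 (by linarith))
    _ = (p ^ (1 / (p - 1))) ^ (d - 1) := by
      rw [← Real.rpow_mul_natCast (by linarith), Nat.cast_sub hd, Nat.cast_one,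
        one_div_mul_eq_div, add_sub_cancel]

theorem nilpotent_perm_group_card_le_general {G X : Type*} [Group G] [Group.IsNilpotent G]
    [MulAction G X] [FaithfulSMul G X] [Finite X] {p : ℝ} (hp : 1 < p)
    (hmin : ∀ q : ℕ, q.Prime → q ∣ Nat.card G → p ≤ q) :
    (Nat.card G : ℝ) ≤
      (p ^ (1 / (p - 1))) ^ (Nat.card X - Nat.card (orbitRel.Quotient G X)) := by
  have hb := one_le_rpow_one_div_sub_one hp.le
  have : Finite G := Finite.of_injective _ (toPerm_injective (α := G) (β := X))
  induction hN : Nat.card G using Nat.strong_induction_on generalizing G with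
  | _ N ih =>
  subst hN
  cases subsingleton_or_nontrivial G
  · simpa using one_le_pow₀ hb
  obtain ⟨x, hx⟩ := exists_stabilizer_ne_top G X
  obtain ⟨M, hM, hMtop, hxM⟩ :=
    exists_normal_ge_of_ne_top Group.normalizerCondition_of_isNilpotent hx
  have hlt : Nat.card M < Nat.card G :=
    M.card_le_card_group.lt_of_ne fun h => hMtop (M.card_eq_iff_eq_top.1 h)
  have hidx : M.index ≠ 1 := fun h => hMtop (Subgroup.index_eq_one.1 h)
  have hcardM := ih _ hlt (fun q hq hqM => hmin q hq (hqM.trans M.card_subgroup_dvd_card))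
    inferInstance rfl
  have hpM : p ≤ M.index :=
    (hmin _ (Nat.minFac_prime hidx) ((Nat.minFac_dvd _).trans M.index_dvd_card)).trans
      (mod_cast Nat.minFac_le (Nat.pos_of_ne_zero M.index_ne_zero_of_finite))
  calc (Nat.card G : ℝ) = Nat.card M * M.index := mod_cast M.card_mul_index.symm
    _ ≤ (p ^ (1 / (p - 1))) ^ (Nat.card X - Nat.card (orbitRel.Quotient M X)) *
        (p ^ (1 / (p - 1))) ^ (M.index - 1) :=
      mul_le_mul hcardM (le_rpow_one_div_sub_one_pow hp hpM) (Nat.cast_nonneg _) (by positivity)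
    _ ≤ (p ^ (1 / (p - 1))) ^ (Nat.card X - Nat.card (orbitRel.Quotient G X)) := by
      rw [← pow_add]
      refine pow_le_pow_right₀ hb ?_
      have := card_orbits_add_index_le hxM
      have := card_orbits_le_card M X
      have := M.index_ne_zero_of_finite
      omega

/-- A nilpotent permutation group of degree `n` with smallest prime divisor `p` of its order
has order at most `(p^(1/(p-1)))^(n-1)`. -/
theorem nilpotent_perm_group_card_le (n : ℕ) (G : Subgroup (Equiv.Perm (Fin n)))
    (hnil : Group.IsNilpotent G) (hG : 1 < Nat.card G)
    (p : ℕ) (hp : p = (Nat.card G).minFac) :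
    (Nat.card G : ℝ) ≤ ((p : ℝ) ^ ((1 : ℝ) / ((p : ℝ) - 1))) ^ (n - 1) := by
  have hp1 : (1 : ℝ) < p := mod_cast hp ▸ (Nat.minFac_prime hG.ne').one_lt
  refine (nilpotent_perm_group_card_le_general (X := Fin n) hp1 fun q hq hqG =>
    mod_cast hp ▸ Nat.minFac_le_of_dvd hq.two_le hqG).trans ?_
  simpa using pow_le_pow_right₀ (one_le_rpow_one_div_sub_one hp1.le)
    (card_sub_card_orbits_le G (Fin n))
end

section
/- Let N be a nontrivial nilpotent π-group acting faithfully (by automorphisms) on a π'-group H, where π is a set of primes and p is the smallest member of π. Then there exists x ∈ H with |C_N(x)| ≤ (|N|/p)^(1/p). -/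
/-!
By Glauberman's lemma the groups `H`, `∏ Q` (a product of `N`-invariant Sylow subgroups of `H`) and
`K × H ⧸ K` have equally many fixed points under every subgroup of `N`. By Möbius inversion these
numbers determine which subgroups of `N` are point stabilizers, and in a direct product small
stabilizers can be found one factor at a time, so `N` may be assumed to act irreducibly on an
abelian group `H`.

If some element `≠ 1` of an abelian normal subgroup `A` fixes a point `≠ 1`, the groups of fixed
points of maximal stabilizers in `A` form a system of imprimitivity. Coarsening it, the subgroup
fixing every block is normal of prime index `r ≥ p`, and `r ^ (p - 1) ≤ p ^ (r - 1)` makes up for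
this index.

Otherwise every abelian normal subgroup is cyclic and acts without fixed points. If `|N|` is odd,
then all stabilizers of points `≠ 1` are trivial. If `|N|` is even, then `p = 2`, and a
stabilizer `C` embeds in `Aut A` for a self-centralizing cyclic normal subgroup `A` with
`A ⊓ C = 1`, whence `2 |C| ^ 2 ≤ 2 φ(|A|) |C| ≤ |A| |C| ≤ |N|`.
-/

open MulAction Subgroup

theorem succ_pow_le_succ_mul_pow {k r : ℕ} (h : k ≤ r) : (r + 1) ^ k ≤ (k + 1) * r ^ k := by
  induction k with
  | zero => simp
  | succ k ih =>
    calc (r + 1) ^ (k + 1) = (r + 1) ^ k * (r + 1) := pow_succ _ _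
      _ ≤ (k + 1) * r ^ k * (r + 1) := by gcongr; exact ih (by omega)
      _ = (k + 1) * r ^ (k + 1) + (k + 1) * r ^ k := by ring
      _ ≤ (k + 1) * r ^ (k + 1) + r * r ^ k := by gcongr
      _ = (k + 1 + 1) * r ^ (k + 1) := by ring

theorem pow_sub_one_le_pow_sub_one {p r : ℕ} (hp : 1 ≤ p) (h : p ≤ r) :
    r ^ (p - 1) ≤ p ^ (r - 1) := by
  induction r, h using Nat.le_induction with
  | base => rfl
  | succ r hpr ih =>
    calc (r + 1) ^ (p - 1) ≤ (p - 1 + 1) * r ^ (p - 1) := succ_pow_le_succ_mul_pow (by omega)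
      _ = r ^ (p - 1) * p := by rw [Nat.sub_add_cancel hp, mul_comm]
      _ ≤ p ^ (r - 1) * p := by gcongr
      _ = p ^ (r + 1 - 1) := by rw [← pow_succ]; congr 1; omega

/-- The members of `𝒮` are to be thought of as point stabilizers, so that `sInf 𝒮` is the kernel
of the action: every subgroup `M` not contained in it meets some member of `𝒮` in a subgroup `D`
with `p * |D| ^ p ≤ |M| * |M ⊓ sInf 𝒮| ^ (p - 1)`. -/
def HasSmallMeets {G : Type*} [Group G] (p : ℕ) (𝒮 : Set (Subgroup G)) : Prop :=
  ∀ M : Subgroup G, M ≤ sInf 𝒮 ∨ ∃ S ∈ 𝒮,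
    p * Nat.card ↥(M ⊓ S) ^ p ≤ Nat.card M * Nat.card ↥(M ⊓ sInf 𝒮) ^ (p - 1)

theorem relIndex_mul_card_inf {G : Type*} [Group G] (S L : Subgroup G) :
    S.relIndex L * Nat.card ↥(L ⊓ S) = Nat.card L := by
  simpa [inf_comm, mul_comm] using relIndex_inf_mul_relIndex ⊥ S L

theorem card_inf_mul_card_le_of_le {G : Type*} [Group G] [Finite G] {K C : Subgroup G}
    (hKC : K ≤ C) (S : Subgroup G) :
    Nat.card ↥(C ⊓ S) * Nat.card K ≤ Nat.card C * Nat.card ↥(K ⊓ S) := by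
  calc Nat.card ↥(C ⊓ S) * Nat.card K
      = S.relIndex K * (Nat.card ↥(C ⊓ S) * Nat.card ↥(K ⊓ S)) := by
        rw [← relIndex_mul_card_inf S K]; ring
    _ ≤ S.relIndex C * (Nat.card ↥(C ⊓ S) * Nat.card ↥(K ⊓ S)) :=
        Nat.mul_le_mul_right _ (relIndex_le_of_le_right hKC FiniteIndex.index_ne_zero)
    _ = Nat.card C * Nat.card ↥(K ⊓ S) := by rw [← relIndex_mul_card_inf S C]; ring

section SmallMeets

variable {G ι : Type*} [Group G] [Finite G] {p : ℕ}

theorem HasSmallMeets.le_sInf_or_exists_ne_top (hp : 2 ≤ p) {𝒮 : Set (Subgroup G)}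
    (h : HasSmallMeets p 𝒮) (M : Subgroup G) :
    M ≤ sInf 𝒮 ∨ ∃ S ∈ 𝒮, S ≠ ⊤ ∧
      p * Nat.card ↥(M ⊓ S) ^ p ≤ Nat.card M * Nat.card ↥(M ⊓ sInf 𝒮) ^ (p - 1) := by
  refine (h M).imp_right fun ⟨S, hS, hle⟩ => ⟨S, hS, ?_, hle⟩
  rintro rfl
  have : p * Nat.card M ^ p ≤ 1 * Nat.card M ^ p := calc
    p * Nat.card M ^ p ≤ Nat.card M * Nat.card ↥(M ⊓ sInf 𝒮) ^ (p - 1) := by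
      rwa [inf_top_eq] at hle
    _ ≤ Nat.card M * Nat.card M ^ (p - 1) := by gcongr; exact card_le_of_le inf_le_left
    _ = 1 * Nat.card M ^ p := by rw [one_mul, mul_pow_sub_one (by omega)]
  have := Nat.le_of_mul_le_mul_right this (pow_pos Nat.card_pos p)
  omega

theorem card_inf_pow_mul_le {C K S L : Subgroup G} (hp : p ≠ 0) (hKC : K ≤ C) {a b c : ℕ}
    (hC : Nat.card C ^ p * b ≤ a * Nat.card K ^ (p - 1))
    (hS : c * Nat.card ↥(K ⊓ S) ^ p ≤ Nat.card K * Nat.card ↥(K ⊓ L) ^ (p - 1)) :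
    Nat.card ↥(C ⊓ S) ^ p * (b * c) ≤ a * Nat.card ↥(K ⊓ L) ^ (p - 1) := by
  refine Nat.le_of_mul_le_mul_right ?_ (pow_pos (Nat.card_pos (α := K)) p)
  calc Nat.card ↥(C ⊓ S) ^ p * (b * c) * Nat.card K ^ p
      = (Nat.card ↥(C ⊓ S) * Nat.card K) ^ p * (b * c) := by rw [mul_pow]; ring
    _ ≤ (Nat.card C * Nat.card ↥(K ⊓ S)) ^ p * (b * c) := by
        gcongr ?_ ^ p * _; exact card_inf_mul_card_le_of_le hKC S
    _ = (Nat.card C ^ p * b) * (c * Nat.card ↥(K ⊓ S) ^ p) := by rw [mul_pow]; ring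
    _ ≤ (a * Nat.card K ^ (p - 1)) * (Nat.card K * Nat.card ↥(K ⊓ L) ^ (p - 1)) :=
        Nat.mul_le_mul hC hS
    _ = a * Nat.card ↥(K ⊓ L) ^ (p - 1) * Nat.card K ^ p := by
        rw [← mul_pow_sub_one hp (Nat.card K)]; ring

theorem exists_subset_card_inf_pow_le (hp : 2 ≤ p) {𝒮 : ι → Set (Subgroup G)}
    (h : ∀ i, HasSmallMeets p (𝒮 i)) (s : Finset ι) :
    ∃ t ⊆ s, t.inf (fun i => sInf (𝒮 i)) = s.inf (fun i => sInf (𝒮 i)) ∧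
      ∃ S : ι → Subgroup G, (∀ i ∈ t, S i ∈ 𝒮 i ∧ S i ≠ ⊤) ∧
        Nat.card ↥(t.inf S) ^ p * p ^ t.card ≤
          Nat.card G * Nat.card ↥(t.inf fun i => sInf (𝒮 i)) ^ (p - 1) := by
  classical
  induction s using Finset.induction_on with
  | empty =>
    exact ⟨∅, subset_rfl, rfl, fun _ => ⊤, by simp, by simp [mul_pow_sub_one (by omega : p ≠ 0)]⟩
  | insert a s has ih =>
    obtain ⟨t, hts, hinf, S, hS, hle⟩ := ih
    rcases (h a).le_sInf_or_exists_ne_top hp (t.inf fun i => sInf (𝒮 i)) with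
      ha | ⟨T, hT, hT1, hTle⟩
    · refine ⟨t, hts.trans (Finset.subset_insert a s), ?_, S, hS, hle⟩
      rw [Finset.inf_insert, ← hinf, inf_eq_right.mpr ha]
    · have hat : a ∉ t := fun ha => has (hts ha)
      have hS' : ∀ i ∈ t, Function.update S a T i = S i := fun i hi =>
        Function.update_of_ne (ne_of_mem_of_not_mem hi hat) ..
      refine ⟨insert a t, Finset.insert_subset_insert a hts, ?_, Function.update S a T, ?_, ?_⟩
      · rw [Finset.inf_insert, hinf, Finset.inf_insert]
      · rw [Finset.forall_mem_insert, Function.update_self]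
        exact ⟨⟨hT, hT1⟩, fun i hi => by rw [hS' i hi]; exact hS i hi⟩
      · rw [Finset.inf_insert, Finset.inf_insert, Function.update_self, inf_comm T,
          inf_comm (sInf _), Finset.inf_congr rfl hS', Finset.card_insert_of_notMem hat, pow_succ]
        exact card_inf_pow_mul_le (by omega)
          (Finset.inf_mono_fun fun i hi => sInf_le (hS i hi).1) hle hTle

theorem exists_card_iInf_pow_le [Nontrivial G] [Finite ι] (hp : 2 ≤ p)
    {𝒮 : ι → Set (Subgroup G)} (hne : ∀ i, (𝒮 i).Nonempty) (h : ∀ i, HasSmallMeets p (𝒮 i))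
    (hbot : ⨅ i, sInf (𝒮 i) = ⊥) :
    ∃ S : ι → Subgroup G, (∀ i, S i ∈ 𝒮 i) ∧ p * Nat.card ↥(⨅ i, S i) ^ p ≤ Nat.card G := by
  classical
  have := Fintype.ofFinite ι
  obtain ⟨t, -, hinf, S, hS, hle⟩ := exists_subset_card_inf_pow_le hp h Finset.univ
  rw [hinf, Finset.inf_univ_eq_iInf, hbot, card_bot, one_pow, mul_one] at hle
  have ht : t.card ≠ 0 := by
    rw [Finset.card_ne_zero, Finset.nonempty_iff_ne_empty]
    rintro rfl
    rw [Finset.inf_empty, Finset.inf_univ_eq_iInf, hbot] at hinf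
    exact top_ne_bot hinf
  choose T hT using hne
  refine ⟨fun i => if i ∈ t then S i else T i, fun i => ?_, le_trans ?_ hle⟩
  · dsimp only
    split_ifs with hi
    exacts [(hS i hi).1, hT i]
  · rw [mul_comm]
    gcongr
    · exact card_le_of_le <| Finset.le_inf fun i hi => (iInf_le _ i).trans (if_pos hi).le
    · exact le_self_pow₀ (by omega) ht

end SmallMeets

theorem prime_index_of_isCoatom {G : Type*} [Group G] [Finite G] {M : Subgroup G} [M.Normal]
    (hM : IsCoatom M) : M.index.Prime := by
  obtain ⟨r, hr, hdvd⟩ := Nat.exists_prime_and_dvd (mt index_eq_one.mp hM.1)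
  have : Fact r.Prime := ⟨hr⟩
  obtain ⟨g, hg⟩ := exists_prime_orderOf_dvd_card' (G := G ⧸ M) r hdvd
  have hker : M = (⊥ : Subgroup (G ⧸ M)).comap (QuotientGroup.mk' M) := by
    rw [MonoidHom.comap_bot, QuotientGroup.ker_mk']
  have hbot : ⊥ < zpowers g := by
    rw [bot_lt_iff_ne_bot, Ne, zpowers_eq_bot, ← orderOf_eq_one_iff, hg]
    exact hr.ne_one
  have htop : (zpowers g).comap (QuotientGroup.mk' M) = ⊤ := hM.2 _ <| hker.trans_lt <|
    (comap_lt_comap_of_surjective (QuotientGroup.mk'_surjective M)).mpr hbot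
  have hmap := map_comap_eq_self_of_surjective (QuotientGroup.mk'_surjective M) (zpowers g)
  rw [htop, map_top_of_surjective _ (QuotientGroup.mk'_surjective M)] at hmap
  rw [index, ← card_top, hmap, Nat.card_zpowers, hg]
  exact hr

theorem exists_normal_isPGroup_quotient (U : Type*) [Group U] [Finite U] [Nontrivial U]
    [Group.IsSolvable U] :
    ∃ (V : Subgroup U) (_ : V.Normal), Nat.card V < Nat.card U ∧
      ∃ r, r.Prime ∧ r ∣ Nat.card U ∧ IsPGroup r (U ⧸ V) := by
  obtain ⟨V, hV, hle⟩ := (eq_top_or_exists_le_coatom (commutator U)).resolve_left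
    (Group.IsSolvable.commutator_lt_top_of_nontrivial U).ne
  have hn : V.Normal := .of_commutator_le _ hle
  refine ⟨V, hn, ?_, V.index, prime_index_of_isCoatom hV, V.index_dvd_card,
    .of_card (n := 1) (pow_one V.index).symm⟩
  rw [← V.card_mul_index]
  exact lt_mul_of_one_lt_right Nat.card_pos (prime_index_of_isCoatom hV).one_lt

theorem card_smul_eq_dvd_card {K X : Type*} [Group K] [MulAction K X] (x y : X)
    (h : ∃ k : K, k • x = y) : Nat.card {k : K // k • x = y} ∣ Nat.card K := by
  obtain ⟨k₀, rfl⟩ := h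
  rw [Nat.card_congr ((Equiv.mulLeft k₀⁻¹).subtypeEquiv fun k => ?_ :
    {k : K // k • x = k₀ • x} ≃ stabilizer K x)]
  · exact card_subgroup_dvd_card _
  · rw [Equiv.coe_mulLeft, mem_stabilizer_iff, mul_smul, inv_smul_eq_iff]

section Glauberman

variable {U K X : Type*} [Group U] [Finite U] [Group.IsSolvable U] [Group K]
  [MulDistribMulAction U K] [MulAction U X] [MulAction K X] [SMulDistribClass U K X]

instance (V : Subgroup U) : SMulDistribClass V K X :=
  ⟨fun v k x => smul_distrib_smul (v : U) k x⟩

theorem exists_mem_fixedPoints_smul_eq (hco : (Nat.card U).Coprime (Nat.card K)) {x y : X}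
    (hx : x ∈ fixedPoints U X) (hy : y ∈ fixedPoints U X) (hxy : y ∈ orbit K x) :
    ∃ k ∈ FixedPoints.subgroup U K, k • x = y := by
  induction h : Nat.card U using Nat.strong_induction_on generalizing U with
  | _ n ih =>
    subst h
    cases subsingleton_or_nontrivial U with
    | inl _ =>
      obtain ⟨k, hk⟩ := hxy
      exact ⟨k, fun u => by rw [Subsingleton.elim u 1, one_smul], hk⟩
    | inr _ =>
      obtain ⟨V, _, hlt, r, hr, hrU, hP⟩ := exists_normal_isPGroup_quotient U
      have : Fact r.Prime := ⟨hr⟩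
      obtain ⟨k, hk, hkx⟩ := ih _ hlt (hco.coprime_dvd_left V.card_subgroup_dvd_card)
        (fun v => hx v) (fun v => hy v) rfl
      let T : SubMulAction (U ⧸ V) (FixedPoints.subgroup V K) :=
        { carrier := {k | k • x = y}
          smul_mem' := fun u k (hk : (k : K) • x = y) => by
            induction u using QuotientGroup.induction_on with
            | H u =>
              change (u • (k : K)) • x = y
              rw [← hx u, ← smul_distrib_smul, hk, hy u] }
      have hT : Nat.card T ∣ Nat.card K :=
        (card_smul_eq_dvd_card x y ⟨⟨k, hk⟩, hkx⟩).trans (card_subgroup_dvd_card _)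
      obtain ⟨⟨l, hlx⟩, hl⟩ := hP.nonempty_fixed_point_of_prime_not_dvd_card T fun hrT =>
        Nat.Prime.not_coprime_iff_dvd.mpr ⟨r, hr, hrU, hrT.trans hT⟩ hco
      exact ⟨l, fun u => congrArg (fun t : T => ((t : FixedPoints.subgroup V K) : K))
        (hl (u : U ⧸ V)), hlx⟩

theorem orbit_inter_fixedPoints_eq_orbit (hco : (Nat.card U).Coprime (Nat.card K)) {x : X}
    (hx : x ∈ fixedPoints U X) :
    orbit K x ∩ fixedPoints U X = orbit (FixedPoints.subgroup U K) x := by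
  ext y
  constructor
  · rintro ⟨hyx, hy⟩
    obtain ⟨k, hk, hkx⟩ := exists_mem_fixedPoints_smul_eq hco hx hy hyx
    exact ⟨⟨k, hk⟩, hkx⟩
  · rintro ⟨⟨k, hk⟩, rfl⟩
    refine ⟨mem_orbit x k, fun u => ?_⟩
    change u • k • x = k • x
    rw [smul_distrib_smul, hk u, hx u]

theorem exists_mem_orbit_mem_fixedPoints (hco : (Nat.card U).Coprime (Nat.card K)) {x : X}
    (hx : ∀ u : U, u • x ∈ orbit K x) : ∃ y ∈ orbit K x, y ∈ fixedPoints U X := by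
  induction h : Nat.card U using Nat.strong_induction_on generalizing U with
  | _ n ih =>
    subst h
    cases subsingleton_or_nontrivial U with
    | inl _ =>
      exact ⟨x, mem_orbit_self x, fun u => by rw [Subsingleton.elim u 1, one_smul]⟩
    | inr _ =>
      obtain ⟨V, _, hlt, r, hr, hrU, hP⟩ := exists_normal_isPGroup_quotient U
      have : Fact r.Prime := ⟨hr⟩
      have hcoV := hco.coprime_dvd_left V.card_subgroup_dvd_card
      obtain ⟨y, hyx, hy⟩ := ih _ hlt hcoV (fun v => hx v) rfl
      have smul_mem_orbit (u : U) {z : X} (hz : z ∈ orbit K x) : u • z ∈ orbit K x := by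
        obtain ⟨k, rfl⟩ := hz
        rw [smul_distrib_smul]
        exact mem_orbit_of_mem_orbit _ (hx u)
      let S : SubMulAction (U ⧸ V) (fixedPoints V X) :=
        { carrier := {z | (z : X) ∈ orbit K x}
          smul_mem' := fun u z hz => by
            induction u using QuotientGroup.induction_on with
            | H u => exact smul_mem_orbit u hz }
      have hcard : Nat.card S ∣ Nat.card K := by
        have hS : Subtype.val '' (S : Set (fixedPoints V X)) =
            orbit (FixedPoints.subgroup V K) y := by
          rw [← orbit_inter_fixedPoints_eq_orbit hcoV hy, orbit_eq_iff.mpr hyx, Set.inter_comm]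
          exact Subtype.image_preimage_coe (fixedPoints V X) (orbit K x)
        rw [← SetLike.coe_sort_coe, Nat.card_coe_set_eq,
          ← Set.ncard_image_of_injective _ Subtype.val_injective, hS, ← index_stabilizer]
        exact (index_dvd_card _).trans (card_subgroup_dvd_card _)
      obtain ⟨⟨z, hzx⟩, hz⟩ := hP.nonempty_fixed_point_of_prime_not_dvd_card S fun hrS =>
        Nat.Prime.not_coprime_iff_dvd.mpr ⟨r, hr, hrU, hrS.trans hcard⟩ hco
      exact ⟨z, hzx, fun u => congrArg (fun t : S => ((t : fixedPoints V X) : X))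
        (hz (u : U ⧸ V))⟩

end Glauberman

theorem card_eq_sum_mu_mul_card_le {α Z : Type*} [PartialOrder α] [OrderTop α]
    [LocallyFiniteOrder α] [DecidableEq α] [Finite Z] (f : Z → α) (a : α) :
    (Nat.card {z // f z = a} : ℤ) =
      ∑ b ∈ Finset.Ici a, IncidenceAlgebra.mu ℤ a b * Nat.card {z // b ≤ f z} := by
  classical
  have := Fintype.ofFinite Z
  refine IncidenceAlgebra.moebius_inversion_top (𝕜 := ℤ) (fun a => (Nat.card {z // f z = a} : ℤ))
    (fun b => (Nat.card {z // b ≤ f z} : ℤ)) (fun a => ?_) a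
  simp only [Nat.card_eq_fintype_card, Fintype.card_subtype]
  norm_cast
  rw [Finset.card_eq_sum_card_fiberwise (t := Finset.Ici a) (f := f) (by simp [Set.MapsTo])]
  refine Finset.sum_congr rfl fun b hb => congrArg _ ?_
  ext z
  simp only [Finset.mem_filter, Finset.mem_univ, true_and]
  exact ⟨fun hz => hz.2, fun hz => ⟨hz ▸ Finset.mem_Ici.mp hb, hz⟩⟩

theorem range_subset_of_forall_card_le_eq {α X Y : Type*} [PartialOrder α] [OrderTop α] [Finite α]
    [Finite X] [Finite Y] {s : X → α} {t : Y → α}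
    (h : ∀ a, Nat.card {x // a ≤ s x} = Nat.card {y // a ≤ t y}) :
    Set.range s ⊆ Set.range t := by
  classical
  have := Fintype.ofFinite α
  let _ : LocallyFiniteOrder α := Fintype.toLocallyFiniteOrder
  rintro _ ⟨x, rfl⟩
  have hcard : Nat.card {x' // s x' = s x} = Nat.card {y // t y = s x} := by
    zify
    simp only [card_eq_sum_mu_mul_card_le, h]
  have : Nonempty {x' // s x' = s x} := ⟨⟨x, rfl⟩⟩
  obtain ⟨y, hy⟩ := (Nat.card_pos_iff.mp (hcard ▸ Nat.card_pos)).1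
  exact ⟨y, hy⟩

theorem mem_fixedPoints_iff_le_stabilizer {G X : Type*} [Group G] [MulAction G X]
    {U : Subgroup G} {x : X} : x ∈ fixedPoints U X ↔ U ≤ stabilizer G x :=
  ⟨fun hx u hu => hx ⟨u, hu⟩, fun hx u => hx u.2⟩

theorem range_stabilizer_eq_of_card_fixedPoints_eq {G X Y : Type*} [Group G] [Finite G]
    [MulAction G X] [MulAction G Y] [Finite X] [Finite Y]
    (h : ∀ U : Subgroup G, Nat.card (fixedPoints U X) = Nat.card (fixedPoints U Y)) :
    Set.range (stabilizer G : X → Subgroup G) = Set.range (stabilizer G : Y → Subgroup G) := by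
  have hle (U : Subgroup G) : Nat.card {x : X // U ≤ stabilizer G x} =
      Nat.card {y : Y // U ≤ stabilizer G y} := by
    simpa only [← mem_fixedPoints_iff_le_stabilizer] using h U
  exact (range_subset_of_forall_card_le_eq hle).antisymm
    (range_subset_of_forall_card_le_eq fun U => (hle U).symm)

/-- A subgroup which is mapped into itself by a group of operators, cf. `IsInvariantSubring`.
It inherits the action, and so does the set of its left cosets. -/
class IsInvariantSubgroup (G : Type*) {H : Type*} [Group G] [Group H] [MulDistribMulAction G H]
    (K : Subgroup H) : Prop where
  smul_mem : ∀ (g : G) {k : H}, k ∈ K → g • k ∈ K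

namespace IsInvariantSubgroup

variable {G H : Type*} [Group G] [Group H] [MulDistribMulAction G H] (K : Subgroup H)

theorem smul_mem_iff [IsInvariantSubgroup G K] {g : G} {k : H} : g • k ∈ K ↔ k ∈ K :=
  ⟨fun h => inv_smul_smul g k ▸ smul_mem g⁻¹ h, smul_mem g⟩

instance [IsInvariantSubgroup G K] : MulDistribMulAction G K where
  smul g k := ⟨g • k.1, smul_mem g k.2⟩
  one_smul k := Subtype.ext (one_smul G k.1)
  mul_smul g h k := Subtype.ext (mul_smul g h k.1)
  smul_mul g k l := Subtype.ext (smul_mul' g k.1 l.1)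
  smul_one g := Subtype.ext (smul_one g)

instance [IsInvariantSubgroup G K] : QuotientAction G K :=
  ⟨fun g x y hxy => by rw [← smul_inv', ← smul_mul']; exact smul_mem g hxy⟩

instance [IsInvariantSubgroup G K] [K.Normal] : MulDistribMulAction G (H ⧸ K) where
  smul_mul g x y := by
    induction x using QuotientGroup.induction_on with | H x
    induction y using QuotientGroup.induction_on with | H y
    exact congrArg QuotientGroup.mk (smul_mul' g x y)
  smul_one g := congrArg QuotientGroup.mk (smul_one g)

instance [IsInvariantSubgroup G K] : SMulDistribClass G H (H ⧸ K) :=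
  ⟨fun g h x => by
    induction x using QuotientGroup.induction_on with
    | H x => exact congrArg QuotientGroup.mk (smul_mul' g h x)⟩

instance (U : Subgroup G) [IsInvariantSubgroup G K] : IsInvariantSubgroup U K :=
  ⟨fun u _ hk => smul_mem (u : G) hk⟩

instance [IsInvariantSubgroup G K] : IsInvariantSubgroup G (normalizer (K : Set H)) where
  smul_mem g x hx := by
    rw [mem_normalizer_iff] at hx ⊢
    intro y
    rw [← smul_mem_iff (G := G) K (g := g⁻¹), hx, ← smul_mem_iff (G := G) K (g := g)]
    simp [smul_mul']

instance [IsInvariantSubgroup G K] (L : Subgroup K) [IsInvariantSubgroup G L] :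
    IsInvariantSubgroup G (L.map K.subtype) where
  smul_mem g := by
    rintro _ ⟨x, hx, rfl⟩
    exact ⟨g • x, smul_mem g hx, rfl⟩

theorem of_mem_fixedPoints {q : ℕ} {Q : Sylow q H} (hQ : Q ∈ fixedPoints G (Sylow q H)) :
    IsInvariantSubgroup G (Q : Subgroup H) where
  smul_mem g k hk := by
    have : g • k ∈ g • Q := smul_mem_pointwise_smul k g (Q : Subgroup H) hk
    rwa [hQ g] at this

theorem mem_fixedPoints {q : ℕ} (Q : Sylow q H) [IsInvariantSubgroup G (Q : Subgroup H)] :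
    Q ∈ fixedPoints G (Sylow q H) := fun g => by
  refine SetLike.ext fun x => (mem_pointwise_smul_iff_inv_smul_mem (S := (Q : Subgroup H))).trans ?_
  exact smul_mem_iff (G := G) (Q : Subgroup H)

end IsInvariantSubgroup

instance {U H : Type*} [Group U] [Group H] [MulDistribMulAction U H] (q : ℕ) :
    SMulDistribClass U H (Sylow q H) where
  smul_distrib_smul u h Q := by
    ext x
    simp only [Sylow.pointwise_smul_def, Sylow.coe_subgroup_smul,
      mem_pointwise_smul_iff_inv_smul_mem, ← map_inv, MulAut.smul_def, MulAut.conj_apply,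
      smul_mul', smul_inv', inv_smul_smul]

section StableSylow

variable {U H : Type*} [Group U] [Finite U] [Group.IsSolvable U] [Group H] [Finite H]
  [MulDistribMulAction U H]

theorem exists_isInvariantSubgroup_sylow (hco : (Nat.card U).Coprime (Nat.card H)) (q : ℕ)
    [Fact q.Prime] : ∃ Q : Sylow q H, IsInvariantSubgroup U (Q : Subgroup H) := by
  obtain ⟨P⟩ : Nonempty (Sylow q H) := inferInstance
  obtain ⟨Q, -, hQ⟩ := exists_mem_orbit_mem_fixedPoints (K := H) (x := P) hco
    fun u => exists_smul_eq H P (u • P)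
  exact ⟨Q, .of_mem_fixedPoints hQ⟩

theorem exists_isInvariantSubgroup_isPGroup_lt (hco : (Nat.card U).Coprime (Nat.card H)) {q n : ℕ}
    [Fact q.Prime] {R : Subgroup H} [IsInvariantSubgroup U R] (hR : Nat.card R = q ^ n)
    (hdvd : q ^ (n + 1) ∣ Nat.card H) :
    ∃ R' : Subgroup H, R < R' ∧ IsInvariantSubgroup U R' ∧ IsPGroup q R' := by
  obtain ⟨P, _⟩ := exists_isInvariantSubgroup_sylow (U := U) (H := normalizer (R : Set H))
    (hco.coprime_dvd_right (card_subgroup_dvd_card _)) q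
  have : (R.subgroupOf (normalizer (R : Set H))).Normal := normal_in_normalizer
  have hRp : IsPGroup q (R.subgroupOf (normalizer (R : Set H))) :=
    (IsPGroup.of_card hR).comap_subtype
  have hRP : R.subgroupOf (normalizer (R : Set H)) ≤ P := hRp.le_sylow_of_normal P
  have hne : R.subgroupOf (normalizer (R : Set H)) ≠ P := fun h =>
    P.not_dvd_index (h ▸ Sylow.prime_dvd_card_quotient_normalizer hdvd hR)
  refine ⟨(P : Subgroup (normalizer (R : Set H))).map (Subgroup.subtype _), ?_, inferInstance,
    P.2.map _⟩
  exact (map_subgroupOf_eq_of_le le_normalizer).symm.trans_lt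
    (map_subtype_lt_map_subtype.mpr (hRP.lt_of_ne hne))

theorem exists_isInvariantSubgroup_sylow_ge (hco : (Nat.card U).Coprime (Nat.card H)) {q : ℕ}
    [Fact q.Prime] {T : Subgroup H} [IsInvariantSubgroup U T] (hT : IsPGroup q T) :
    ∃ Q : Sylow q H, T ≤ Q ∧ IsInvariantSubgroup U (Q : Subgroup H) := by
  obtain ⟨R, hTR, ⟨hRp, hRU⟩, hmax⟩ := Finite.exists_le_maximal
    (p := fun R : Subgroup H => IsPGroup q R ∧ IsInvariantSubgroup U R) ⟨hT, ‹_›⟩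
  obtain ⟨n, hn⟩ := IsPGroup.iff_card.mp hRp
  have hdvd : ¬ q ^ (n + 1) ∣ Nat.card H := fun hdvd => by
    obtain ⟨R', hlt, hR'U, hR'p⟩ := exists_isInvariantSubgroup_isPGroup_lt (U := U) hco hn hdvd
    exact hlt.not_ge (hmax ⟨hR'p, hR'U⟩ hlt.le)
  have hdvd' : q ^ n ∣ Nat.card H := hn ▸ card_subgroup_dvd_card R
  have hq : q.Prime := Fact.out
  rw [hq.pow_dvd_iff_le_factorization Nat.card_pos.ne'] at hdvd hdvd'
  refine ⟨Sylow.ofCard R ?_, hTR, hRU⟩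
  rw [hn, show n = (Nat.card H).factorization q by omega]

theorem exists_sylow_fixedPoints_eq_subgroupOf (hco : (Nat.card U).Coprime (Nat.card H)) {q : ℕ}
    [Fact q.Prime] (Q : Sylow q H) [IsInvariantSubgroup U (Q : Subgroup H)] :
    ∃ T : Sylow q (FixedPoints.subgroup U H),
      (T : Subgroup _) = (Q : Subgroup H).subgroupOf (FixedPoints.subgroup U H) := by
  let T : Sylow q (FixedPoints.subgroup U H) := default
  let T' : Subgroup H := (T : Subgroup (FixedPoints.subgroup U H)).map (Subgroup.subtype _)
  have : IsInvariantSubgroup U T' := ⟨fun u => by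
    rintro _ ⟨x, hx, rfl⟩
    exact ⟨x, hx, (x.2 u).symm⟩⟩
  obtain ⟨R, hTR, _⟩ := exists_isInvariantSubgroup_sylow_ge (U := U) hco (T := T') (T.2.map _)
  obtain ⟨c, hc, rfl⟩ := exists_mem_fixedPoints_smul_eq (U := U) (K := H) hco
    (IsInvariantSubgroup.mem_fixedPoints R) (IsInvariantSubgroup.mem_fixedPoints Q)
    (exists_smul_eq H R Q)
  refine ⟨(⟨c, hc⟩ : FixedPoints.subgroup U H) • T, ?_⟩
  refine (Sylow.is_maximal' _ ((c • R).2.comap_subtype) ?_).symm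
  rintro _ ⟨x, hx, rfl⟩
  exact smul_mem_pointwise_smul (x : H) (MulAut.conj c) (R : Subgroup H) (hTR ⟨x, hx, rfl⟩)

theorem card_fixedPoints_sylow (hco : (Nat.card U).Coprime (Nat.card H)) {q : ℕ}
    [Fact q.Prime] (Q : Sylow q H) [IsInvariantSubgroup U (Q : Subgroup H)] :
    Nat.card (fixedPoints U (Q : Subgroup H)) =
      q ^ (Nat.card (fixedPoints U H)).factorization q := by
  obtain ⟨T, hT⟩ := exists_sylow_fixedPoints_eq_subgroupOf (U := U) hco Q
  rw [show Nat.card (fixedPoints U H) = Nat.card (FixedPoints.subgroup U H) from rfl,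
    ← T.card_eq_multiplicity,
    show Nat.card T = Nat.card (T : Subgroup (FixedPoints.subgroup U H)) from rfl, hT]
  exact Nat.card_congr
    { toFun x := ⟨⟨x.1.1, fun u => congrArg Subtype.val (x.2 u)⟩, x.1.2⟩
      invFun x := ⟨⟨x.1.1, x.2⟩, fun u => Subtype.ext (x.1.2 u)⟩ }

theorem card_fixedPoints_pi {G ι : Type*} [Group G] [Fintype ι] (X : ι → Type*)
    [∀ i, MulAction G (X i)] :
    Nat.card (fixedPoints G (∀ i, X i)) = ∏ i, Nat.card (fixedPoints G (X i)) := by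
  rw [← Nat.card_pi]
  exact Nat.card_congr
    { toFun x i := ⟨x.1 i, fun g => congrFun (x.2 g) i⟩
      invFun x := ⟨fun i => x i, fun g => funext fun i => (x i).2 g⟩ }

theorem card_fixedPoints_eq_card_fixedPoints_pi_sylow (hco : (Nat.card U).Coprime (Nat.card H))
    [∀ q : (Nat.card H).primeFactors, Fact q.1.Prime]
    (Q : ∀ q : (Nat.card H).primeFactors, Sylow q H)
    [∀ q, IsInvariantSubgroup U (Q q : Subgroup H)] :
    Nat.card (fixedPoints U H) = Nat.card (fixedPoints U (∀ q, (Q q : Subgroup H))) := by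
  have hne : Nat.card (fixedPoints U H) ≠ 0 :=
    (Nat.card_pos (α := FixedPoints.subgroup U H)).ne'
  have hdvd : Nat.card (fixedPoints U H) ∣ Nat.card H :=
    card_subgroup_dvd_card (FixedPoints.subgroup U H)
  rw [card_fixedPoints_pi]
  simp only [card_fixedPoints_sylow hco]
  rw [Finset.prod_coe_sort (Nat.card H).primeFactors
    fun q => q ^ (Nat.card (fixedPoints U H)).factorization q]
  conv_lhs => rw [← Nat.prod_factorization_pow_eq_self hne]
  exact Finsupp.prod_of_support_subset _ (Nat.primeFactors_mono hdvd Nat.card_pos.ne') _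
    fun q _ => pow_zero q

end StableSylow

theorem card_fixedPoints_prod {G : Type*} [Group G] (X Y : Type*) [MulAction G X]
    [MulAction G Y] :
    Nat.card (fixedPoints G (X × Y)) = Nat.card (fixedPoints G X) * Nat.card (fixedPoints G Y) := by
  rw [← Nat.card_prod]
  exact Nat.card_congr
    { toFun x := ⟨⟨x.1.1, fun g => congrArg Prod.fst (x.2 g)⟩,
        ⟨x.1.2, fun g => congrArg Prod.snd (x.2 g)⟩⟩
      invFun x := ⟨⟨x.1, x.2⟩, fun g => Prod.ext (x.1.2 g) (x.2.2 g)⟩ }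

theorem card_fixedPoints_eq_card_fixedPoints_prod_quotient {U H : Type*} [Group U] [Finite U]
    [Group.IsSolvable U] [Group H] [MulDistribMulAction U H]
    (hco : (Nat.card U).Coprime (Nat.card H)) (K : Subgroup H) [IsInvariantSubgroup U K] :
    Nat.card (fixedPoints U H) = Nat.card (fixedPoints U (K × (H ⧸ K))) := by
  have hone : ((1 : H) : H ⧸ K) ∈ fixedPoints U (H ⧸ K) :=
    fun u => congrArg QuotientGroup.mk (smul_one u)
  have horbit := orbit_inter_fixedPoints_eq_orbit (K := H) hco hone
  rw [orbit_eq_univ, Set.univ_inter] at horbit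
  have hstab : Nat.card (stabilizer (FixedPoints.subgroup U H) ((1 : H) : H ⧸ K)) =
      Nat.card (fixedPoints U K) := by
    have hmem (c : FixedPoints.subgroup U H) :
        c ∈ stabilizer (FixedPoints.subgroup U H) ((1 : H) : H ⧸ K) ↔ (c : H) ∈ K := by
      change ((c * 1 : H) : H ⧸ K) = ((1 : H) : H ⧸ K) ↔ _
      rw [mul_one, QuotientGroup.eq, mul_one, inv_mem_iff]
    exact Nat.card_congr
      { toFun c := ⟨⟨c.1, (hmem c.1).mp c.2⟩, fun u => Subtype.ext (c.1.2 u)⟩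
        invFun k := ⟨⟨k.1, fun u => congrArg Subtype.val (k.2 u)⟩, (hmem _).mpr k.1.2⟩ }
  have hcard := card_mul_index (stabilizer (FixedPoints.subgroup U H) ((1 : H) : H ⧸ K))
  rw [index_stabilizer, hstab] at hcard
  rw [card_fixedPoints_prod, horbit, Nat.card_coe_set_eq (orbit _ _)]
  exact hcard.symm

/-- The assertion that a group of automorphisms of `H` has a small point stabilizer, for all
nontrivial nilpotent groups of order coprime to `|H|` with no prime divisor below `p`. -/
def HasSmallStabilizers (p : ℕ) (H : Type*) [Group H] : Prop :=
  ∀ Γ : Subgroup (MulAut H), Γ ≠ ⊥ → Group.IsNilpotent Γ →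
    (∀ q : ℕ, q.Prime → q ∣ Nat.card Γ → p ≤ q) → (Nat.card Γ).Coprime (Nat.card H) →
    ∃ x : H, p * Nat.card (stabilizer Γ x) ^ p ≤ Nat.card Γ

section SmallStabilizers

variable {G : Type*} [Group G]

theorem card_inf_ker_mul_card_map {G' : Type*} [Group G'] (f : G →* G') (L : Subgroup G) :
    Nat.card ↥(L ⊓ f.ker) * Nat.card (L.map f) = Nat.card L := by
  rw [← relIndex_ker, mul_comm, relIndex_mul_card_inf]

theorem sInf_range_stabilizer_eq_ker_toMulAut (G H : Type*) [Group G] [Group H]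
    [MulDistribMulAction G H] :
    sInf (Set.range (stabilizer G : H → Subgroup G)) =
      (MulDistribMulAction.toMulAut G H).ker := by
  ext g
  rw [sInf_range, mem_iInf, MonoidHom.mem_ker, MulEquiv.ext_iff]
  rfl

theorem card_stabilizer_map_toMulAut {H : Type*} [Group H] [MulDistribMulAction G H]
    (M : Subgroup G) (x : H) :
    Nat.card (stabilizer (M.map (MulDistribMulAction.toMulAut G H)) x) =
      Nat.card ((M ⊓ stabilizer G x).map (MulDistribMulAction.toMulAut G H)) := by
  rw [← card_subtype]
  congr 2
  ext φ
  constructor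
  · rintro ⟨⟨_, g, hg, rfl⟩, hgx, rfl⟩
    exact ⟨g, ⟨hg, hgx⟩, rfl⟩
  · rintro ⟨g, ⟨hg, hgx⟩, rfl⟩
    exact ⟨⟨_, g, hg, rfl⟩, hgx, rfl⟩

theorem HasSmallStabilizers.hasSmallMeets [Group.IsNilpotent G] {H : Type*} [Group H]
    [MulDistribMulAction G H] {p : ℕ} (hp : p ≠ 0) (h : HasSmallStabilizers p H)
    (hpG : ∀ q : ℕ, q.Prime → q ∣ Nat.card G → p ≤ q) (hco : (Nat.card G).Coprime (Nat.card H)) :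
    HasSmallMeets p (Set.range (stabilizer G : H → Subgroup G)) := by
  intro M
  rw [sInf_range_stabilizer_eq_ker_toMulAut]
  set f := MulDistribMulAction.toMulAut G H
  have hdvd : Nat.card (M.map f) ∣ Nat.card G :=
    (card_map_dvd M f).trans (card_subgroup_dvd_card M)
  refine or_iff_not_imp_left.mpr fun hM => ?_
  have : Group.IsNilpotent (M.map f) :=
    Group.nilpotent_of_surjective (f.subgroupMap M) (f.subgroupMap_surjective M)
  obtain ⟨x, hx⟩ := h (M.map f) (mt (map_eq_bot_iff M).mp hM) this
    (fun q hq hqM => hpG q hq (hqM.trans hdvd)) (hco.coprime_dvd_left hdvd)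
  refine ⟨_, ⟨x, rfl⟩, ?_⟩
  have hker : f.ker ≤ stabilizer G x := fun g hg => DFunLike.congr_fun hg x
  rw [card_stabilizer_map_toMulAut] at hx
  rw [← card_inf_ker_mul_card_map f (M ⊓ stabilizer G x), inf_assoc, inf_eq_right.mpr hker,
    ← card_inf_ker_mul_card_map f M]
  calc p * (Nat.card ↥(M ⊓ f.ker) * Nat.card ((M ⊓ stabilizer G x).map f)) ^ p
      = Nat.card ↥(M ⊓ f.ker) ^ p * (p * Nat.card ((M ⊓ stabilizer G x).map f) ^ p) := by ring
    _ ≤ Nat.card ↥(M ⊓ f.ker) ^ p * Nat.card (M.map f) := by gcongr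
    _ = Nat.card ↥(M ⊓ f.ker) * Nat.card (M.map f) * Nat.card ↥(M ⊓ f.ker) ^ (p - 1) := by
      rw [← mul_pow_sub_one hp]; ring

theorem exists_card_stabilizer_pow_le_of_range_eq [Finite G] [Nontrivial G] {X ι : Type*} [Finite ι]
    [MulAction G X] [FaithfulSMul G X] {p : ℕ} (hp : 2 ≤ p) {𝒮 : ι → Set (Subgroup G)}
    (hne : ∀ i, (𝒮 i).Nonempty) (h : ∀ i, HasSmallMeets p (𝒮 i))
    (hX : Set.range (stabilizer G : X → Subgroup G) = (fun S => ⨅ i, S i) '' Set.univ.pi 𝒮) :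
    ∃ x : X, p * Nat.card (stabilizer G x) ^ p ≤ Nat.card G := by
  have hbot : ⨅ i, sInf (𝒮 i) = ⊥ := by
    refine (eq_bot_iff_forall _).mpr fun g hg => eq_of_smul_eq_smul (α := X) fun x => ?_
    obtain ⟨S, hS, hSx⟩ := hX.subset ⟨x, rfl⟩
    rw [one_smul, ← mem_stabilizer_iff, ← hSx]
    exact iInf_mono (fun i => sInf_le (hS i (Set.mem_univ i))) hg
  obtain ⟨S, hS, hle⟩ := exists_card_iInf_pow_le hp hne h hbot
  obtain ⟨x, hx⟩ := hX.superset ⟨S, fun i _ => hS i, rfl⟩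
  exact ⟨x, by rwa [hx]⟩

theorem stabilizer_pi {ι : Type*} {X : ι → Type*} [∀ i, MulAction G (X i)] (x : ∀ i, X i) :
    stabilizer G x = ⨅ i, stabilizer G (x i) := by
  ext g
  simp only [mem_iInf, mem_stabilizer_iff, funext_iff, Pi.smul_apply]

theorem stabilizer_prod {X Y : Type*} [MulAction G X] [MulAction G Y] (x : X × Y) :
    stabilizer G x = stabilizer G x.1 ⊓ stabilizer G x.2 := by
  ext g
  simp only [mem_inf, mem_stabilizer_iff, Prod.ext_iff, Prod.smul_fst, Prod.smul_snd]

theorem range_stabilizer_pi {ι : Type*} (X : ι → Type*) [∀ i, MulAction G (X i)] :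
    Set.range (stabilizer G : (∀ i, X i) → Subgroup G) =
      (fun S => ⨅ i, S i) '' Set.univ.pi fun i => Set.range (stabilizer G : X i → Subgroup G) := by
  ext S
  constructor
  · rintro ⟨x, rfl⟩
    exact ⟨fun i => stabilizer G (x i), fun i _ => ⟨x i, rfl⟩, (stabilizer_pi x).symm⟩
  · rintro ⟨S, hS, rfl⟩
    choose x hx using fun i => hS i (Set.mem_univ i)
    exact ⟨x, (stabilizer_pi x).trans (iInf_congr hx)⟩

theorem range_stabilizer_prod (X Y : Type*) [MulAction G X] [MulAction G Y] :
    Set.range (stabilizer G : X × Y → Subgroup G) =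
      (fun S => ⨅ b : Bool, S b) '' Set.univ.pi fun b =>
        cond b (Set.range (stabilizer G : X → Subgroup G))
          (Set.range (stabilizer G : Y → Subgroup G)) := by
  ext S
  simp only [iInf_bool_eq]
  constructor
  · rintro ⟨x, rfl⟩
    exact ⟨fun b => cond b (stabilizer G x.1) (stabilizer G x.2),
      fun b _ => by cases b; exacts [⟨x.2, rfl⟩, ⟨x.1, rfl⟩], (stabilizer_prod x).symm⟩
  · rintro ⟨S, hS, rfl⟩
    obtain ⟨x, hx⟩ := hS true trivial
    obtain ⟨y, hy⟩ := hS false trivial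
    exact ⟨(x, y), (stabilizer_prod _).trans (congrArg₂ _ hx hy)⟩

variable [Nontrivial G] [Group.IsNilpotent G] {H : Type*} [Group H] [MulDistribMulAction G H]
  [FaithfulSMul G H] {p : ℕ}

theorem HasSmallStabilizers.exists_card_stabilizer_pow_le (hp : 2 ≤ p)
    (h : HasSmallStabilizers p H) (hpG : ∀ q : ℕ, q.Prime → q ∣ Nat.card G → p ≤ q)
    (hco : (Nat.card G).Coprime (Nat.card H)) :
    ∃ x : H, p * Nat.card (stabilizer G x) ^ p ≤ Nat.card G := by
  have hker : (MulDistribMulAction.toMulAut G H).ker = ⊥ :=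
    (eq_bot_iff_forall _).mpr fun g hg => eq_of_smul_eq_smul (α := H) fun x =>
      (DFunLike.congr_fun hg x).trans (one_smul G x).symm
  have hle := h.hasSmallMeets (by omega) hpG hco ⊤
  rw [sInf_range_stabilizer_eq_ker_toMulAut, hker, top_le_iff, inf_bot_eq, card_bot, one_pow,
    mul_one, card_top] at hle
  obtain ⟨_, ⟨x, rfl⟩, hx⟩ := hle.resolve_left bot_ne_top
  exact ⟨x, by rwa [top_inf_eq] at hx⟩

variable [Finite G] [Finite H]

theorem exists_card_stabilizer_pow_le_of_sylow (hp : 2 ≤ p)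
    (hpG : ∀ q : ℕ, q.Prime → q ∣ Nat.card G → p ≤ q) (hco : (Nat.card G).Coprime (Nat.card H))
    (h : ∀ (q : ℕ) [Fact q.Prime] (Q : Sylow q H), HasSmallStabilizers p (Q : Subgroup H)) :
    ∃ x : H, p * Nat.card (stabilizer G x) ^ p ≤ Nat.card G := by
  have (q : (Nat.card H).primeFactors) : Fact q.1.Prime := ⟨Nat.prime_of_mem_primeFactors q.2⟩
  choose Q hQ using fun q : (Nat.card H).primeFactors =>
    exists_isInvariantSubgroup_sylow (U := G) hco q
  refine exists_card_stabilizer_pow_le_of_range_eq hp (fun q => Set.range_nonempty _)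
    (fun q => (h q (Q q)).hasSmallMeets (by omega) hpG
      (hco.coprime_dvd_right (card_subgroup_dvd_card _)))
    (.trans ?_ (range_stabilizer_pi fun q => (Q q : Subgroup H)))
  exact range_stabilizer_eq_of_card_fixedPoints_eq fun U =>
    card_fixedPoints_eq_card_fixedPoints_pi_sylow
      (hco.coprime_dvd_left (card_subgroup_dvd_card U)) Q

theorem exists_card_stabilizer_pow_le_of_normal (hp : 2 ≤ p)
    (hpG : ∀ q : ℕ, q.Prime → q ∣ Nat.card G → p ≤ q) (hco : (Nat.card G).Coprime (Nat.card H))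
    (K : Subgroup H) [K.Normal] [IsInvariantSubgroup G K] (hK : HasSmallStabilizers p K)
    (hHK : HasSmallStabilizers p (H ⧸ K)) :
    ∃ x : H, p * Nat.card (stabilizer G x) ^ p ≤ Nat.card G := by
  have hne : p ≠ 0 := by omega
  have hK' := hK.hasSmallMeets hne hpG (hco.coprime_dvd_right (card_subgroup_dvd_card K))
  have hHK' := hHK.hasSmallMeets hne hpG (hco.coprime_dvd_right (card_quotient_dvd_card K))
  refine exists_card_stabilizer_pow_le_of_range_eq hp
    (Bool.rec (Set.range_nonempty _) (Set.range_nonempty _)) (Bool.rec hHK' hK')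
    (.trans ?_ (range_stabilizer_prod K (H ⧸ K)))
  exact range_stabilizer_eq_of_card_fixedPoints_eq fun U =>
    card_fixedPoints_eq_card_fixedPoints_prod_quotient
      (hco.coprime_dvd_left (card_subgroup_dvd_card U)) K

end SmallStabilizers

/-- A system of imprimitivity for the action of `G` on `H`: a decomposition of `H` as the internal
direct product of subgroups `W i` that are permuted by `G` as their indices are. -/
structure IsSystemOfImprimitivity (G : Type*) {ι H : Type*} [Group G] [MulAction G ι] [CommGroup H]
    [MulDistribMulAction G H] (W : ι → Subgroup H) : Prop where
  indep : iSupIndep W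
  iSup_eq_top : ⨆ i, W i = ⊤
  smul_mem : ∀ (g : G) (i : ι) {x : H}, x ∈ W i → g • x ∈ W (g • i)

namespace IsSystemOfImprimitivity

section Prod

variable {G ι H : Type*} [Group G] [MulAction G ι] [CommGroup H] [MulDistribMulAction G H]
  {W : ι → Subgroup H} [Fintype ι]

theorem eq_of_prod_eq (hW : iSupIndep W) {u v : ι → H} (hu : ∀ i, u i ∈ W i)
    (hv : ∀ i, v i ∈ W i) (h : ∏ i, u i = ∏ i, v i) : u = v := by
  refine funext fun i => div_eq_one.mp ?_
  refine eq_one_of_noncommProd_eq_one_of_iSupIndep Finset.univ (fun i => u i / v i)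
    (fun _ _ _ _ _ => mul_comm _ _) W hW (fun i _ => div_mem (hu i) (hv i)) ?_ i (Finset.mem_univ i)
  rw [Finset.noncommProd_eq_prod, Finset.prod_div_distrib, h, div_self']

theorem smul_eq_of_mem_stabilizer_prod (hW : IsSystemOfImprimitivity G W) {w : ι → H}
    (hw : ∀ i, w i ∈ W i) {g : G} (hg : g ∈ stabilizer G (∏ i, w i)) (i : ι) :
    g • w i = w (g • i) := by
  have hg' : ∏ i, g • w (g⁻¹ • i) = ∏ i, w i := calc
    ∏ i, g • w (g⁻¹ • i) = g • ∏ i, w (g⁻¹ • i) := Finset.smul_prod'.symm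
    _ = g • ∏ i, w i := congrArg _ (Fintype.prod_equiv (toPerm g⁻¹) _ _ fun _ => rfl)
    _ = ∏ i, w i := hg
  simpa using congrFun (eq_of_prod_eq hW.indep
    (fun i => by simpa using hW.smul_mem g (g⁻¹ • i) (hw (g⁻¹ • i))) hw hg') (g • i)

end Prod

theorem map_index {G ι κ H : Type*} [Group G] [MulAction G ι] [MulAction G κ] [CommGroup H]
    [MulDistribMulAction G H] {W : ι → Subgroup H} [Finite ι] (hW : IsSystemOfImprimitivity G W)
    {f : ι → κ} (hf : ∀ (g : G) i, f (g • i) = g • f i) :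
    IsSystemOfImprimitivity G fun k => ⨆ i ∈ f ⁻¹' {k}, W i where
  indep k := by
    have h := hW.indep.disjoint_biSup_biSup' (s := f ⁻¹' {k}) disjoint_compl_right
      (Set.toFinite _)
    refine h.mono_right (iSup₂_le fun l hl => biSup_mono fun i hi => ?_)
    rintro rfl
    exact hl hi.symm
  iSup_eq_top := by
    rw [iSup_comm, ← hW.iSup_eq_top]
    simp
  smul_mem g k := by
    suffices ⨆ i ∈ f ⁻¹' {k}, W i ≤
        (⨆ i ∈ f ⁻¹' {g • k}, W i).comap (MulDistribMulAction.toMonoidHom H g) from @this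
    refine iSup₂_le fun i hi x hx => ?_
    exact mem_iSup_of_mem (g • i) (mem_iSup_of_mem ((hf g i).trans (congrArg _ hi))
      (hW.smul_mem g i hx))

end IsSystemOfImprimitivity

theorem smul_quotient_eq_self_iff {G : Type*} [Group G] {M : Subgroup G} [M.Normal] {g : G}
    {j : G ⧸ M} : g • j = j ↔ g ∈ M := by
  induction j using QuotientGroup.induction_on with
  | H a =>
    rw [MulAction.Quotient.smul_mk, eq_comm, QuotientGroup.eq, smul_eq_mul,
      (inferInstance : M.Normal).mem_comm_iff, mul_inv_cancel_right]

theorem mul_mul_pow_le_of_pow_mul_pow_le {p r c m : ℕ} (hp : 1 ≤ p) (hpr : p ≤ r)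
    (h : c ^ p * p ^ r ≤ m) : p * (r * c) ^ p ≤ m * r := by
  refine Nat.le_of_mul_le_mul_right (c := p ^ (r - 1)) ?_ (by positivity)
  calc p * (r * c) ^ p * p ^ (r - 1)
      = c ^ p * (p * p ^ (r - 1)) * r ^ p := by ring
    _ = c ^ p * p ^ r * (r * r ^ (p - 1)) := by
        rw [mul_pow_sub_one (by omega : p ≠ 0), mul_pow_sub_one (by omega : r ≠ 0)]
    _ ≤ m * (r * p ^ (r - 1)) :=
        Nat.mul_le_mul h (Nat.mul_le_mul_left r (pow_sub_one_le_pow_sub_one hp hpr))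
    _ = m * r * p ^ (r - 1) := by ring

namespace IsSystemOfImprimitivity

variable {G H : Type*} [Group G] [CommGroup H] [MulDistribMulAction G H] {M : Subgroup G}
  {W : G ⧸ M → Subgroup H}

theorem isInvariantSubgroup [M.Normal] (hW : IsSystemOfImprimitivity G W) (j : G ⧸ M) :
    IsInvariantSubgroup M (W j) where
  smul_mem g x hx := by
    have h := hW.smul_mem (g : G) j hx
    rwa [smul_quotient_eq_self_iff.mpr g.2] at h

theorem iInf_stabilizer_eq_bot [FaithfulSMul G H] (hW : IsSystemOfImprimitivity G W) :
    ⨅ j, sInf (Set.range fun x : W j => stabilizer M (x : H)) = ⊥ := by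
  refine (eq_bot_iff_forall _).mpr fun g hg => ?_
  have hfix : ⨆ j, W j ≤ (MulDistribMulAction.toMonoidHom H g).eqLocus (MonoidHom.id H) :=
    iSup_le fun j x hx => mem_sInf.mp (mem_iInf.mp hg j) _ ⟨⟨x, hx⟩, rfl⟩
  rw [hW.iSup_eq_top] at hfix
  exact eq_of_smul_eq_smul fun x : H => (hfix (mem_top x)).trans (one_smul M x).symm

theorem stabilizer_prod_subgroupOf_le [M.Normal] [Fintype (G ⧸ M)]
    (hW : IsSystemOfImprimitivity G W) {w : G ⧸ M → H} (hw : ∀ j, w j ∈ W j) :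
    (stabilizer G (∏ j, w j)).subgroupOf M ≤ ⨅ j, stabilizer M (w j) :=
  le_iInf fun j g hg => (hW.smul_eq_of_mem_stabilizer_prod hw hg j).trans
    (congrArg w (smul_quotient_eq_self_iff.mpr g.2))

theorem card_stabilizer_prod_le [Finite G] [M.Normal] [Fintype (G ⧸ M)]
    (hW : IsSystemOfImprimitivity G W) {w : G ⧸ M → H} (hw : ∀ j, w j ∈ W j) :
    Nat.card (stabilizer G (∏ j, w j)) ≤
      M.index * Nat.card ↥(⨅ j, stabilizer M (w j)) := by
  rw [← relIndex_mul_card_inf M, ← subgroupOf_map_subtype, card_subtype]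
  exact Nat.mul_le_mul (Nat.le_of_dvd (Nat.pos_of_ne_zero FiniteIndex.index_ne_zero)
    (relIndex_dvd_index_of_normal M _)) (card_le_of_le (hW.stabilizer_prod_subgroupOf_le hw))

theorem card_stabilizer_prod_le_of_eq_one_iff [Finite G] [M.Normal] [Fintype (G ⧸ M)]
    (hW : IsSystemOfImprimitivity G W) {w : G ⧸ M → H} (hw : ∀ j, w j ∈ W j) {i : G ⧸ M}
    (hi : ∀ j, w j = 1 ↔ j = i) :
    Nat.card (stabilizer G (∏ j, w j)) ≤ Nat.card ↥(⨅ j, stabilizer M (w j)) := by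
  have hM : stabilizer G (∏ j, w j) ≤ M := fun g hg => by
    rw [← smul_quotient_eq_self_iff (j := i), ← hi, ← hW.smul_eq_of_mem_stabilizer_prod hw hg,
      (hi i).mpr rfl, smul_one]
  rw [← inf_eq_left.mpr hM, ← subgroupOf_map_subtype, card_subtype]
  exact card_le_of_le (hW.stabilizer_prod_subgroupOf_le hw)

theorem exists_ne_one_stabilizer_eq {s : Set (G ⧸ M)} {S : G ⧸ M → Subgroup M}
    (hne : ∀ j, W j ≠ ⊥)
    (hS : ∀ j ∈ s, S j ∈ Set.range (fun x : W j => stabilizer M (x : H)) ∧ S j ≠ ⊤) (j : G ⧸ M) :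
    ∃ x ∈ W j, x ≠ 1 ∧ (j ∈ s → stabilizer M x = S j) := by
  by_cases hj : j ∈ s
  · obtain ⟨⟨x, hx⟩, hx1⟩ := hS j hj
    refine ⟨x, x.2, fun h => hx1 (hx.symm.trans ?_), fun _ => hx⟩
    simp only [h]
    exact (eq_top_iff' _).mpr smul_one
  · obtain ⟨x, hx, hx1⟩ := (W j).bot_or_exists_ne_one.resolve_left (hne j)
    exact ⟨x, hx, hx1, fun h => absurd h hj⟩

/-- Either every `W j` contributes a component to the chosen element, and its stabilizer in `M` is
small enough to make up for the index of `M`, or one component can be taken to be trivial, which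
forces the stabilizer into `M`. -/
theorem exists_card_stabilizer_pow_le [Finite G] [FaithfulSMul G H] [M.Normal] {p : ℕ}
    (hW : IsSystemOfImprimitivity G W) (hp : 2 ≤ p) (hpM : p ≤ M.index) (hne : ∀ j, W j ≠ ⊥)
    (h : ∀ j, HasSmallMeets p (Set.range fun x : W j => stabilizer M (x : H))) :
    ∃ x : H, p * Nat.card (stabilizer G x) ^ p ≤ Nat.card G := by
  classical
  have := Fintype.ofFinite (G ⧸ M)
  obtain ⟨t, -, hinf, S, hS, hle⟩ := exists_subset_card_inf_pow_le hp h Finset.univ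
  rw [hinf, Finset.inf_univ_eq_iInf, hW.iInf_stabilizer_eq_bot, card_bot, one_pow, mul_one] at hle
  choose w hw hw1 hwS using exists_ne_one_stabilizer_eq (s := t) hne hS
  have hinfS : ∀ {v : G ⧸ M → H}, (∀ j ∈ t, v j = w j) → ⨅ j, stabilizer M (v j) ≤ t.inf S :=
    fun hv => Finset.le_inf fun j hj => (iInf_le _ j).trans_eq (by rw [hv j hj, hwS j hj])
  rw [← M.card_mul_index]
  by_cases ht : t = Finset.univ
  · refine ⟨∏ j, w j, ?_⟩
    have htM : t.card = M.index := by
      rw [ht, Finset.card_univ, index_eq_card, Nat.card_eq_fintype_card]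
    calc p * Nat.card (stabilizer G (∏ j, w j)) ^ p
        ≤ p * (M.index * Nat.card ↥(t.inf S)) ^ p := by
          gcongr
          exact (hW.card_stabilizer_prod_le hw).trans
            (Nat.mul_le_mul_left _ (card_le_of_le (hinfS fun _ _ => rfl)))
      _ ≤ Nat.card M * M.index := mul_mul_pow_le_of_pow_mul_pow_le (by omega) hpM (htM ▸ hle)
  · obtain ⟨i, hi⟩ : ∃ i, i ∉ t := by simpa [Finset.eq_univ_iff_forall] using ht
    set v := Function.update w i 1 with hv
    have hvW : ∀ j, v j ∈ W j := (Function.forall_update_iff w fun j x => x ∈ W j).mpr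
      ⟨one_mem _, fun j _ => hw j⟩
    have hv1 : ∀ j, v j = 1 ↔ j = i := fun j => by
      rcases eq_or_ne j i with rfl | hj
      · simp [hv]
      · simp [hv, hj, hw1 j]
    have hvw : ∀ j ∈ t, v j = w j := fun j hj =>
      Function.update_of_ne (ne_of_mem_of_not_mem hj hi) _ _
    refine ⟨∏ j, v j, ?_⟩
    calc p * Nat.card (stabilizer G (∏ j, v j)) ^ p
        ≤ M.index * Nat.card ↥(t.inf S) ^ p := by
          gcongr
          exact (hW.card_stabilizer_prod_le_of_eq_one_iff hvW hv1).trans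
            (card_le_of_le (hinfS hvw))
      _ ≤ M.index * (Nat.card ↥(t.inf S) ^ p * p ^ t.card) := by
          gcongr
          exact Nat.le_mul_of_pos_right _ (by positivity)
      _ ≤ Nat.card M * M.index := by rw [mul_comm]; gcongr

end IsSystemOfImprimitivity

theorem smul_mem_finsetSup_fixedPoints_of_commute {G H ι : Type*} [Group G] [CommGroup H]
    [MulDistribMulAction G H] {B : ι → Subgroup G} {b : G} {s : Finset ι}
    (hb : ∀ j ∈ s, ∀ c ∈ B j, Commute b c) {x : H}
    (hx : x ∈ s.sup fun j => FixedPoints.subgroup (B j) H) :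
    b • x ∈ s.sup fun j => FixedPoints.subgroup (B j) H := by
  set F := fun j => FixedPoints.subgroup (B j) H
  suffices s.sup F ≤ (s.sup F).comap (MulDistribMulAction.toMonoidHom H b) from this hx
  refine Finset.sup_le fun j hj y hy => (Finset.le_sup (f := F) hj) fun c => ?_
  change c.1 • b • y = b • y
  rw [← mul_smul, ← (hb j hj c c.2).eq, mul_smul]
  exact congrArg _ (hy c)

theorem iSupIndep_fixedPoints_of_commute {G H ι : Type*} [Group G] [CommGroup H]
    [MulDistribMulAction G H] [Finite ι] {B : ι → Subgroup G}
    (hB : ∀ i j, ∀ b ∈ B i, ∀ c ∈ B j, Commute b c)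
    (h : Pairwise fun i j =>
      Disjoint (FixedPoints.subgroup (B i) H) (FixedPoints.subgroup (B j) H)) :
    iSupIndep fun i => FixedPoints.subgroup (B i) H := by
  classical
  have := Fintype.ofFinite ι
  set F := fun i => FixedPoints.subgroup (B i) H
  suffices ∀ (s : Finset ι), ∀ i ∉ s, Disjoint (F i) (s.sup F) from
    iSupIndep_iff_supIndep_univ.mpr fun s _ i _ his => this s i his
  intro s
  induction s using Finset.induction_on with
  | empty => simp
  | insert k s hk ih =>
    intro i hi
    rw [Finset.mem_insert, not_or] at hi
    rw [Finset.sup_insert, disjoint_def]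
    intro x hxi hx
    obtain ⟨y, hy, z, hz, rfl⟩ := mem_sup.mp hx
    have hyi : y ∈ F i := fun b => by
      have hyz : b.1 • y / y = z / b.1 • z := by
        rw [div_eq_div_iff_mul_eq_mul, ← smul_mul', mul_comm z]
        exact hxi b
      have hby : b.1 • y ∈ F k := by
        have := smul_mem_finsetSup_fixedPoints_of_commute (s := {k}) (x := y)
          (fun j _ => hB i j b b.2)
        rw [Finset.sup_singleton] at this
        exact this hy
      have hbz : b.1 • z ∈ s.sup F :=
        smul_mem_finsetSup_fixedPoints_of_commute (fun j _ => hB i j b b.2) hz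
      exact div_eq_one.mp (disjoint_def.mp (ih k hk) (div_mem hby hy)
        (hyz ▸ div_mem hz hbz))
    obtain rfl := disjoint_def.mp (h hi.1) hyi hy
    rw [one_mul] at hxi ⊢
    exact disjoint_def.mp (ih i hi.2) hxi hz

theorem exists_surjective_to_quotient {G α : Type*} [Group G] [MulAction G α] [IsPretransitive G α]
    {a : α} {M : Subgroup G} (h : stabilizer G a ≤ M) :
    ∃ f : α → G ⧸ M, Function.Surjective f ∧ ∀ (g : G) x, f (g • x) = g • f x := by
  choose r hr using exists_smul_eq G a
  have hmk : ∀ {b c : G}, b • a = c • a → (b : G ⧸ M) = c := fun {b c} hbc => by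
    refine QuotientGroup.eq.mpr (h ?_)
    rw [mem_stabilizer_iff, mul_smul, ← hbc, inv_smul_smul]
  refine ⟨fun x => r x, fun y => ?_, fun g x => ?_⟩
  · induction y using QuotientGroup.induction_on with | H b
    exact ⟨b • a, hmk (hr _)⟩
  · exact (hmk (by rw [hr, mul_smul, hr]) : _ = ((g * r x : G) : G ⧸ M))

theorem range_stabilizer_coe {G H : Type*} [Group G] [Group H] [MulDistribMulAction G H]
    (K : Subgroup H) [IsInvariantSubgroup G K] :
    (Set.range fun x : K => stabilizer G (x : H)) = Set.range (stabilizer G : K → Subgroup G) :=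
  congrArg Set.range <| funext fun x => Subgroup.ext fun g =>
    (Subtype.ext_iff (a1 := g • x) (a2 := x)).symm

namespace IsSystemOfImprimitivity

variable {G ι H : Type*} [Group G] [MulAction G ι] [CommGroup H] [MulDistribMulAction G H]
  {W : ι → Subgroup H} [Nontrivial ι]

theorem ne_top (hW : IsSystemOfImprimitivity G W) (hne : ∀ i, W i ≠ ⊥) (i : ι) : W i ≠ ⊤ :=
  fun hi => by
    obtain ⟨j, hj⟩ := exists_ne i
    have h := hW.indep.pairwiseDisjoint hj
    rw [Function.onFun, hi, disjoint_top] at h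
    exact hne j h

theorem exists_isCoatom_quotient [Finite G] [Finite ι] [IsPretransitive G ι]
    (hW : IsSystemOfImprimitivity G W) (hne : ∀ i, W i ≠ ⊥) :
    ∃ (M : Subgroup G) (V : G ⧸ M → Subgroup H),
      IsCoatom M ∧ IsSystemOfImprimitivity G V ∧ ∀ k, V k ≠ ⊥ := by
  obtain ⟨i, j, hij⟩ := exists_pair_ne ι
  have hi : stabilizer G i ≠ ⊤ := fun h => hij <| by
    obtain ⟨g, rfl⟩ := exists_smul_eq G i j
    exact (h ▸ mem_top g : g ∈ stabilizer G i).symm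
  obtain ⟨M, hM, hiM⟩ := (eq_top_or_exists_le_coatom _).resolve_left hi
  obtain ⟨f, hfsurj, hf⟩ := exists_surjective_to_quotient hiM
  refine ⟨M, _, hM, hW.map_index hf, fun k => ?_⟩
  obtain ⟨l, rfl⟩ := hfsurj k
  exact ne_bot_of_le_ne_bot (hne l) (le_iSup₂_of_le l rfl le_rfl)

theorem exists_card_stabilizer_pow_le_of_isPretransitive [Finite G] [Group.IsNilpotent G]
    [FaithfulSMul G H] [Finite ι] [IsPretransitive G ι] {p : ℕ}
    (hW : IsSystemOfImprimitivity G W) (hne : ∀ i, W i ≠ ⊥) (hp : 2 ≤ p)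
    (hpG : ∀ q : ℕ, q.Prime → q ∣ Nat.card G → p ≤ q) (hco : (Nat.card G).Coprime (Nat.card H))
    (ih : ∀ K : Subgroup H, K ≠ ⊤ → HasSmallStabilizers p K) :
    ∃ x : H, p * Nat.card (stabilizer G x) ^ p ≤ Nat.card G := by
  obtain ⟨M, V, hM, hV, hVne⟩ := hW.exists_isCoatom_quotient hne
  have := NormalizerCondition.normal_of_coatom M Group.normalizerCondition_of_isNilpotent hM
  have hMp := prime_index_of_isCoatom hM
  have : Nontrivial (G ⧸ M) := by
    rw [← Finite.one_lt_card_iff_nontrivial, ← index_eq_card]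
    exact hMp.one_lt
  refine hV.exists_card_stabilizer_pow_le hp (hpG _ hMp M.index_dvd_card) hVne fun k => ?_
  have := hV.isInvariantSubgroup k
  rw [range_stabilizer_coe]
  exact (ih _ (hV.ne_top hVne k)).hasSmallMeets (by omega)
    (fun q hq hqM => hpG q hq (hqM.trans (card_subgroup_dvd_card M)))
    ((hco.coprime_dvd_left (card_subgroup_dvd_card M)).coprime_dvd_right
      (card_subgroup_dvd_card _))

end IsSystemOfImprimitivity

section StabilizerFixedPoints

variable {G H : Type*} [Group G] [Group H] [MulDistribMulAction G H] {A : Subgroup G}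

theorem mem_fixedPoints_stabilizer_iff {x y : H} :
    y ∈ FixedPoints.subgroup (stabilizer A x) H ↔ stabilizer A x ≤ stabilizer A y :=
  ⟨fun h a ha => h ⟨a, ha⟩, fun h a => h a.2⟩

theorem stabilizer_smul_le_stabilizer_smul [A.Normal] {x y : H} (g : G)
    (h : stabilizer A x ≤ stabilizer A y) : stabilizer A (g • x) ≤ stabilizer A (g • y) := by
  intro a ha
  have key : ∀ z : H, (⟨g⁻¹ * a * g, by simpa using ‹A.Normal›.conj_mem a a.2 g⁻¹⟩ : A) • z = z ↔
      a • g • z = g • z := fun z => by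
    rw [← smul_left_cancel_iff g, subgroup_smul_def, subgroup_smul_def, smul_smul, smul_smul]
    simp [mul_assoc, mul_smul]
  exact (key y).mp (h ((key x).mpr ha))

theorem eq_stabilizer_of_stabilizer_smul_le [A.Normal] {x : H}
    (hmax : ∀ y : H, y ≠ 1 → stabilizer A x ≤ stabilizer A y → stabilizer A y ≤ stabilizer A x)
    {y : H} (hy : y ≠ 1) {g : G} (h : stabilizer A (g • x) ≤ stabilizer A y) :
    stabilizer A (g • x) = stabilizer A y := by
  refine h.antisymm ?_
  have hx : stabilizer A x ≤ stabilizer A (g⁻¹ • y) := by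
    simpa using stabilizer_smul_le_stabilizer_smul g⁻¹ h
  have hy' : g⁻¹ • y ≠ 1 := fun h => hy (by rwa [inv_smul_eq_iff, smul_one] at h)
  simpa using stabilizer_smul_le_stabilizer_smul g (hmax _ hy' hx)

open scoped Pointwise

theorem smul_fixedPoints_stabilizer [A.Normal] (g : G) (x : H) :
    g • FixedPoints.subgroup (stabilizer A x) H =
      FixedPoints.subgroup (stabilizer A (g • x)) H := by
  ext y
  rw [mem_pointwise_smul_iff_inv_smul_mem, mem_fixedPoints_stabilizer_iff,
    mem_fixedPoints_stabilizer_iff]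
  refine ⟨fun h => ?_, fun h => ?_⟩
  · simpa using stabilizer_smul_le_stabilizer_smul g h
  · simpa using stabilizer_smul_le_stabilizer_smul g⁻¹ h

end StabilizerFixedPoints

section NotSemiregular

open scoped Pointwise

theorem iSup_orbit_eq_top {G H : Type*} [Group G] [Group H] [MulDistribMulAction G H]
    (hirr : ∀ K : Subgroup H, IsInvariantSubgroup G K → K = ⊥ ∨ K = ⊤)
    {F : Subgroup H} (hF : F ≠ ⊥) : ⨆ K : orbit G F, K.1 = ⊤ := by
  refine (hirr _ ⟨fun g => ?_⟩).resolve_left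
    (ne_bot_of_le_ne_bot hF (le_iSup (Subtype.val : orbit G F → _) ⟨F, mem_orbit_self F⟩))
  suffices ⨆ K : orbit G F, K.1 ≤
      (⨆ K : orbit G F, K.1).comap (MulDistribMulAction.toMonoidHom H g) from @this
  exact iSup_le fun K y hy => mem_iSup_of_mem (g • K) (smul_mem_pointwise_smul _ g K.1 hy)

variable {G H : Type*} [Group G] [Finite G] [CommGroup H] [MulDistribMulAction G H]
  {A : Subgroup G} [A.Normal]

/-- Two conjugates of this group of fixed points meet in the fixed points of a larger subgroup of
`A`, so they are disjoint by maximality of the stabilizer. -/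
theorem isSystemOfImprimitivity_orbit_fixedPoints
    (hirr : ∀ K : Subgroup H, IsInvariantSubgroup G K → K = ⊥ ∨ K = ⊤)
    (hA : ∀ a ∈ A, ∀ b ∈ A, Commute a b) {x : H} (hx : x ≠ 1)
    (hmax : ∀ y : H, y ≠ 1 → stabilizer A x ≤ stabilizer A y → stabilizer A y ≤ stabilizer A x) :
    IsSystemOfImprimitivity G
      (Subtype.val : orbit G (FixedPoints.subgroup (stabilizer A x) H) → Subgroup H) where
  smul_mem g K _ hy := smul_mem_pointwise_smul _ g K.1 hy
  iSup_eq_top := iSup_orbit_eq_top hirr fun h =>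
    hx (mem_bot.mp (h ▸ mem_fixedPoints_stabilizer_iff.mpr le_rfl))
  indep := by
    choose r hr using fun K : orbit G (FixedPoints.subgroup (stabilizer A x) H) => K.2
    have hval : Subtype.val = fun K => FixedPoints.subgroup (stabilizer A (r K • x)) H :=
      funext fun K => (hr K).symm.trans (smul_fixedPoints_stabilizer _ _)
    have : Finite (orbit G (FixedPoints.subgroup (stabilizer A x) H)) := Set.finite_range _
    rw [hval]
    refine iSupIndep_fixedPoints_of_commute
      (fun _ _ b _ c _ => Subtype.ext (hA b b.2 c c.2).eq) fun K L hKL => disjoint_def.mpr ?_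
    intro y hyK hyL
    by_contra hy
    refine hKL (Subtype.ext ?_)
    rw [mem_fixedPoints_stabilizer_iff] at hyK hyL
    have hKL : stabilizer A (r K • x) = stabilizer A (r L • x) :=
      (eq_stabilizer_of_stabilizer_smul_le hmax hy hyK).trans
        (eq_stabilizer_of_stabilizer_smul_le hmax hy hyL).symm
    rw [congrFun hval K, congrFun hval L, hKL]

theorem exists_card_stabilizer_pow_le_of_smul_eq_self [FaithfulSMul G H] [Group.IsNilpotent G]
    {p : ℕ} (hp : 2 ≤ p) (hpG : ∀ q : ℕ, q.Prime → q ∣ Nat.card G → p ≤ q)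
    (hco : (Nat.card G).Coprime (Nat.card H))
    (ih : ∀ K : Subgroup H, K ≠ ⊤ → HasSmallStabilizers p K)
    (hirr : ∀ K : Subgroup H, IsInvariantSubgroup G K → K = ⊥ ∨ K = ⊤)
    (hA : ∀ a ∈ A, ∀ b ∈ A, Commute a b) {a : G} (haA : a ∈ A) (ha : a ≠ 1) {x : H}
    (hx : x ≠ 1) (hax : a • x = x) :
    ∃ x : H, p * Nat.card (stabilizer G x) ^ p ≤ Nat.card G := by
  obtain ⟨_, hxy, ⟨y, hy, rfl⟩, hmax⟩ :=
    (Set.toFinite (stabilizer A '' {y : H | y ≠ 1})).exists_le_maximal (Set.mem_image_of_mem _ hx)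
  have hW := isSystemOfImprimitivity_orbit_fixedPoints hirr hA hy
    fun z hz hyz => hmax (Set.mem_image_of_mem _ hz) hyz
  set F := FixedPoints.subgroup (stabilizer A y) H
  have hFbot : F ≠ ⊥ := fun h =>
    hy (mem_bot.mp (h ▸ mem_fixedPoints_stabilizer_iff.mpr le_rfl))
  have hFtop : F ≠ ⊤ := fun h => ha <| eq_of_smul_eq_smul fun z : H => by
    have hz : z ∈ F := h ▸ mem_top z
    exact (hz ⟨⟨a, haA⟩, hxy hax⟩).trans (one_smul G z).symm
  have hne : ∀ K : orbit G F, K.1 ≠ ⊥ := by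
    rintro ⟨_, g, rfl⟩ h
    exact hFbot (smul_left_cancel g (h.trans (smul_bot g).symm))
  have : Nontrivial (orbit G F) := by
    by_contra h
    rw [not_nontrivial_iff_subsingleton, Set.subsingleton_coe,
      subsingleton_orbit_iff_mem_fixedPoints] at h
    refine (hirr F ⟨fun g y hy => ?_⟩).elim hFbot hFtop
    exact (h g : g • F = F) ▸ smul_mem_pointwise_smul y g F hy
  have : Finite (orbit G F) := Set.finite_range _
  exact hW.exists_card_stabilizer_pow_le_of_isPretransitive hne hp hpG hco ih

end NotSemiregular

section SelfCentralizing

open scoped commutatorElement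

variable {G : Type*} [Group G]

theorem le_of_forall_commutator_mem [Group.IsNilpotent G] {A K : Subgroup G} [K.Normal]
    (h : ∀ c ∈ K, (∀ g : G, ⁅c, g⁆ ∈ A) → c ∈ A) : K ≤ A := by
  have hk : ∀ k, Subgroup.upperCentralSeries G k ⊓ K ≤ A := fun k => by
    induction k with
    | zero => simp
    | succ k ih =>
      rintro c ⟨hck, hcK⟩
      exact h c hcK fun g => ih ⟨Subgroup.mem_upperCentralSeries_succ_iff.mp hck g,
        commutator_le_left K ⊤ (commutator_mem_commutator hcK (mem_top g))⟩
  obtain ⟨n, hn⟩ := Group.IsNilpotent.nilpotent G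
  simpa [hn] using hk n

theorem normal_closure_insert (A : Subgroup G) [A.Normal] {c : G} (hc : ∀ g : G, ⁅c, g⁆ ∈ A) :
    (closure (insert c (A : Set G))).Normal := by
  have hA : A ≤ closure (insert c (A : Set G)) := fun a ha =>
    subset_closure (Set.mem_insert_of_mem c ha)
  suffices h : ∀ g : G, (closure (insert c (A : Set G))).map (MulAut.conj g).toMonoidHom ≤
      closure (insert c (A : Set G)) from ⟨fun b hb g => h g ⟨b, hb, rfl⟩⟩
  intro g
  rw [MonoidHom.map_closure, closure_le]
  rintro _ ⟨x, rfl | hx, rfl⟩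
  · have h := mul_mem (inv_mem (hA (hc g))) (subset_closure (Set.mem_insert x (A : Set G)))
    simpa [commutatorElement_def, mul_assoc] using h
  · exact hA (‹A.Normal›.conj_mem x hx g)

theorem exists_normal_centralizer_eq (G : Type*) [Group G] [Finite G] [Group.IsNilpotent G] :
    ∃ A : Subgroup G, A.Normal ∧ centralizer (A : Set G) = A := by
  obtain ⟨A, -, ⟨_, hAc⟩, hmax⟩ := Finite.exists_le_maximal
    (p := fun A : Subgroup G => A.Normal ∧ A ≤ centralizer A) (a := ⊥) ⟨inferInstance, bot_le⟩
  refine ⟨A, ‹_›, (le_of_forall_commutator_mem fun c hcA hc => ?_).antisymm hAc⟩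
  have hB : IsMulCommutative (closure (insert c (A : Set G))) := isMulCommutative_closure (by
    rintro x (rfl | hx) y (rfl | hy)
    · rfl
    · exact (hcA y hy).symm
    · exact hcA x hx
    · exact hAc hy x hx)
  exact hmax ⟨normal_closure_insert A hc, le_centralizer _⟩
    (fun a ha => subset_closure (Set.mem_insert_of_mem c ha)) (subset_closure (Set.mem_insert c _))

theorem prime_dvd_card_of_centralizer_le [Finite G] [Group.IsNilpotent G] {A : Subgroup G}
    [A.Normal] (hA : centralizer (A : Set G) ≤ A) {q : ℕ} (hq : q.Prime) (hqG : q ∣ Nat.card G) :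
    q ∣ Nat.card A := by
  have : Fact q.Prime := ⟨hq⟩
  let Q : Sylow q G := default
  by_contra hqA
  have hdisj : Disjoint (Q : Subgroup G) A := by
    obtain ⟨k, hk⟩ := IsPGroup.iff_card.mp Q.isPGroup'
    exact disjoint_of_coprime_natCard (hk ▸ ((hq.coprime_iff_not_dvd.mpr hqA).pow_left k))
  have hQA : (Q : Subgroup G) ≤ A := fun g hg => hA fun a ha =>
    (commute_of_normal_of_disjoint _ _ inferInstance inferInstance hdisj g a hg ha).symm
  exact hqA ((Q.dvd_card_of_dvd_card hqG).trans (card_dvd_of_le hQA))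

theorem card_le_totient_of_disjoint [Finite G] {A C : Subgroup G} [A.Normal] [IsCyclic A]
    (hA : centralizer (A : Set G) ≤ A) (hAC : Disjoint A C) :
    Nat.card C ≤ (Nat.card A).totient := by
  have hinj : Function.Injective (MulAut.conjNormal.comp C.subtype : C →* MulAut A) := by
    refine (injective_iff_map_eq_one _).mpr fun c hc => ?_
    refine Subtype.ext (disjoint_def.mp hAC (hA fun a ha => ?_) c.2)
    have h := congrArg Subtype.val (DFunLike.congr_fun hc ⟨a, ha⟩)
    exact (mul_inv_eq_iff_eq_mul.mp h).symm
  exact (Nat.card_le_card_of_injective _ hinj).trans_eq (IsCyclic.card_mulAut A)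

end SelfCentralizing

section EvenOrder

theorem two_mul_totient_le {n : ℕ} (hn : Even n) : 2 * n.totient ≤ n := by
  induction n using Nat.strong_induction_on with
  | _ n ih =>
  obtain ⟨k, rfl⟩ := hn.two_dvd
  rcases Nat.even_or_odd k with hk | hk
  · rcases k.eq_zero_or_pos with rfl | hpos
    · simp
    · rw [Nat.totient_two_mul_of_even hk]
      exact Nat.mul_le_mul_left 2 (ih k (by omega) hk)
  · rw [Nat.totient_two_mul_of_odd hk]
    exact Nat.mul_le_mul_left 2 k.totient_le

theorem two_mul_card_sq_le_of_disjoint {G : Type*} [Group G] [Finite G] [Group.IsNilpotent G]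
    (hG : Even (Nat.card G)) {A C : Subgroup G} [A.Normal] [IsCyclic A]
    (hA : centralizer (A : Set G) ≤ A) (hAC : Disjoint A C) :
    2 * Nat.card C ^ 2 ≤ Nat.card G := by
  have hAeven : Even (Nat.card A) := even_iff_two_dvd.mpr
    (prime_dvd_card_of_centralizer_le hA Nat.prime_two hG.two_dvd)
  calc 2 * Nat.card C ^ 2 = 2 * Nat.card C * Nat.card C := by ring
    _ ≤ 2 * (Nat.card A).totient * Nat.card C := by
      gcongr
      exact card_le_totient_of_disjoint hA hAC
    _ ≤ Nat.card A * Nat.card C := Nat.mul_le_mul_right _ (two_mul_totient_le hAeven)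
    _ = Nat.card (A × C) := Nat.card_prod A C |>.symm
    _ ≤ Nat.card G := Nat.card_le_card_of_injective _ (mul_injective_of_disjoint hAC)

end EvenOrder

section FixedPointFree

variable {A : Type*} [Group A] [Finite A]

theorem isCyclic_of_isUnit_map_sub_one {R : Type*} [CommRing R] [Nontrivial R] (f : A →* R)
    (hf : ∀ a : A, a ≠ 1 → IsUnit (f a - 1)) : IsCyclic A := by
  obtain ⟨m, hm⟩ := Ideal.exists_maximal R
  let g : A →* R ⧸ m := (Ideal.Quotient.mk m).toMonoidHom.comp f
  refine isCyclic_of_injective_ringHom g ((injective_iff_map_eq_one g).mpr fun a ha => ?_)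
  by_contra ha1
  refine hm.ne_top (Ideal.eq_top_of_isUnit_mem m ?_ (hf a ha1))
  rw [← Ideal.Quotient.eq_zero_iff_mem, map_sub, map_one, sub_eq_zero]
  exact ha

open scoped IsMulCommutative in
theorem isCyclic_of_forall_smul_ne [IsMulCommutative A] (H : Type*) [CommGroup H] [Finite H]
    [Nontrivial H] [MulDistribMulAction A H]
    (hfree : ∀ a : A, a ≠ 1 → ∀ x : H, x ≠ 1 → a • x ≠ x) : IsCyclic A := by
  let E : A →* AddMonoid.End (Additive H) :=
    (monoidEndToAdditive H).toMonoidHom.comp (MulDistribMulAction.toMonoidEnd A H)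
  have : Finite (AddMonoid.End (Additive H)) := DFunLike.finite _
  have : Nontrivial (AddMonoid.End (Additive H)) := by
    obtain ⟨x, hx⟩ := exists_ne (1 : H)
    exact ⟨1, 0, fun h => hx (DFunLike.congr_fun h (Additive.ofMul x))⟩
  let R := Subring.closure (Set.range E)
  have : IsMulCommutative R := Subring.isMulCommutative_closure (by
    rintro _ ⟨a, rfl⟩ _ ⟨b, rfl⟩
    rw [← map_mul, mul_comm a b, map_mul])
  let F : A →* R := E.codRestrict R fun a => Subring.subset_closure ⟨a, rfl⟩
  refine isCyclic_of_isUnit_map_sub_one F fun a ha => ?_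
  rw [isUnit_iff_mem_nonZeroDivisors_of_finite, mem_nonZeroDivisors_iff]
  have hker : ∀ s : R, (F a - 1) * s = 0 → s = 0 := fun s hs => by
    refine Subtype.ext (AddMonoidHom.ext fun z => ?_)
    have hz : a • (s.1 z).toMul / (s.1 z).toMul = 1 :=
      DFunLike.congr_fun (congrArg Subtype.val hs) z
    by_contra hsz
    exact hfree a ha _ hsz (div_eq_one.mp hz)
  exact ⟨hker, fun s hs => hker s ((mul_comm _ _).trans hs)⟩

end FixedPointFree

section OddOrder

open scoped commutatorElement

theorem prime_pow_dvd_sub_one_of_dvd_geom_sum {r : ℕ} [hr : Fact r.Prime] (hr2 : Odd r) {m : ℤ}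
    {k : ℕ} (h : (r : ℤ) ^ k ∣ ∑ i ∈ Finset.range r, m ^ i) : (r : ℤ) ^ k ∣ m - 1 := by
  rcases k.eq_zero_or_pos with rfl | hk
  · simp
  have hrp : Prime (r : ℤ) := Nat.prime_iff_prime_int.mp hr.out
  have hpow : (r : ℤ) ∣ m ^ r - 1 :=
    geom_sum_mul m r ▸ (((dvd_pow_self _ hk.ne').trans h).mul_right (m - 1))
  have hm : (r : ℤ) ∣ m - 1 := by
    rw [← ZMod.intCast_zmod_eq_zero_iff_dvd] at hpow ⊢
    push_cast at hpow ⊢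
    rwa [ZMod.pow_card] at hpow
  have hrm : ¬ (r : ℤ) ∣ m := fun hd => hrp.not_isUnit
    (isUnit_of_dvd_one (by simpa using dvd_sub hd hm))
  have hone := emultiplicity_geom_sum₂_eq_one hrp hr2 hm hrm
  simp only [one_pow, mul_one] at hone
  have hk1 : (k : ℕ∞) ≤ 1 := hone ▸ le_emultiplicity_of_pow_dvd h
  exact (pow_dvd_pow _ (by exact_mod_cast hk1)).trans ((pow_one (r : ℤ)).symm ▸ hm)

variable {G : Type*} [Group G]

theorem mul_pow_eq_zpow_geom_sum_mul {a c : G} {m : ℤ} (h : c * a * c⁻¹ = a ^ m) (k : ℕ) :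
    (a * c) ^ k = a ^ (∑ i ∈ Finset.range k, m ^ i) * c ^ k := by
  have hswap : ∀ s : ℤ, c * a ^ s = a ^ (m * s) * c := fun s => by
    rw [zpow_mul, ← h, conj_zpow, inv_mul_cancel_right]
  induction k with
  | zero => simp
  | succ k ih =>
    rw [pow_succ', ih, geom_sum_succ, add_comm, zpow_one_add, pow_succ', mul_assoc,
      ← mul_assoc c, hswap]
    simp only [mul_assoc]

theorem commute_of_mul_pow_prime_eq_one {r : ℕ} [hr : Fact r.Prime] (hr2 : Odd r) {a c : G}
    {m : ℤ} (h : c * a * c⁻¹ = a ^ m) (hc : c ^ r = 1) (hac : (a * c) ^ r = 1) {j : ℕ}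
    (ha : a ^ r ^ j = 1) : Commute c a := by
  obtain ⟨k, -, hk⟩ := (Nat.dvd_prime_pow hr.out).mp (orderOf_dvd_of_pow_eq_one ha)
  have hsum : (r : ℤ) ^ k ∣ ∑ i ∈ Finset.range r, m ^ i := by
    rw [← Nat.cast_pow, ← hk, orderOf_dvd_iff_zpow_eq_one]
    rwa [mul_pow_eq_zpow_geom_sum_mul h, hc, mul_one] at hac
  have hm := prime_pow_dvd_sub_one_of_dvd_geom_sum hr2 hsum
  rw [← Nat.cast_pow, ← hk, orderOf_dvd_iff_zpow_eq_one, zpow_sub_one, mul_inv_eq_one] at hm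
  exact mul_inv_eq_iff_eq_mul.mp (h.trans hm)

theorem exists_forall_conj_eq_zpow (A : Subgroup G) [A.Normal] [IsCyclic A] (c : G) :
    ∃ m : ℤ, ∀ a ∈ A, c * a * c⁻¹ = a ^ m := by
  obtain ⟨m, hm⟩ := MonoidHom.map_cyclic (MulAut.conjNormal c : A ≃* A).toMonoidHom
  exact ⟨m, fun a ha => by simpa using congrArg Subtype.val (hm ⟨a, ha⟩)⟩

theorem commutator_mem_centralizer_of_isCyclic (A : Subgroup G) [A.Normal] [IsCyclic A]
    (g h : G) : ⁅g, h⁆ ∈ centralizer (A : Set G) := by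
  obtain ⟨m, hm⟩ := exists_forall_conj_eq_zpow A g
  obtain ⟨n, hn⟩ := exists_forall_conj_eq_zpow A h
  have hcomm : ∀ a ∈ A, g * h * a * (g * h)⁻¹ = h * g * a * (h * g)⁻¹ := fun a ha => by
    calc g * h * a * (g * h)⁻¹ = g * (h * a * h⁻¹) * g⁻¹ := by group
      _ = h * (g * a * g⁻¹) * h⁻¹ := by
        rw [hn a ha, hm _ (zpow_mem ha n), hm a ha, hn _ (zpow_mem ha m), zpow_comm]
      _ = h * g * a * (h * g)⁻¹ := by group
  intro a ha
  have hb := hcomm _ (‹A.Normal›.conj_mem a ha (h * g)⁻¹)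
  calc a * ⁅g, h⁆
      = h * g * ((h * g)⁻¹ * a * (h * g)⁻¹⁻¹) * (h * g)⁻¹ * (g * h * (h * g)⁻¹) := by
        rw [commutatorElement_def]; group
    _ = ⁅g, h⁆ * a := by rw [← hb, commutatorElement_def]; group

theorem exists_pow_prime_pow_commutator_eq_one [Finite G] [Group.IsNilpotent G] {r : ℕ}
    [Fact r.Prime] {c : G} (hc : c ^ r = 1) (g : G) : ∃ j : ℕ, ⁅g, c⁆ ^ r ^ j = 1 := by
  have hpg : IsPGroup r (zpowers c) := by
    rintro ⟨_, k, rfl⟩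
    refine ⟨1, Subtype.ext ?_⟩
    change (c ^ k) ^ r ^ 1 = 1
    rw [pow_one, ← zpow_natCast, zpow_comm, zpow_natCast, hc, one_zpow]
  obtain ⟨P, hP⟩ := hpg.exists_le_sylow
  have hcP : c ∈ (P : Subgroup G) := hP (mem_zpowers c)
  have hPn : (P : Subgroup G).Normal := inferInstance
  obtain ⟨j, hj⟩ := P.isPGroup' ⟨⁅g, c⁆, mul_mem (hPn.conj_mem c hcP g) (inv_mem hcP)⟩
  exact ⟨j, congrArg Subtype.val hj⟩

theorem commute_conj_of_pow_prime_eq_one [Finite G] [Group.IsNilpotent G] {A : Subgroup G}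
    [A.Normal] [IsCyclic A] (hA : centralizer (A : Set G) ≤ A) {r : ℕ} [Fact r.Prime]
    (hr2 : Odd r) {c : G} (hc : c ^ r = 1) (g : G) : Commute c (g * c * g⁻¹) := by
  obtain ⟨m, hm⟩ := exists_forall_conj_eq_zpow A c
  obtain ⟨j, hj⟩ := exists_pow_prime_pow_commutator_eq_one hc g
  have hmul : ⁅g, c⁆ * c = g * c * g⁻¹ := by simp [commutatorElement_def]
  rw [← hmul]
  refine (commute_of_mul_pow_prime_eq_one hr2 (hm _ (hA ?_)) hc ?_ hj).mul_right (.refl c)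
  · exact commutator_mem_centralizer_of_isCyclic A g c
  · rw [hmul, conj_pow, hc, mul_one, mul_inv_cancel]

theorem isMulCommutative_normalClosure_singleton {c : G} (hc : ∀ g, Commute c (g * c * g⁻¹)) :
    IsMulCommutative (normalClosure {c}) := isMulCommutative_closure (by
  simp only [Group.mem_conjugatesOfSet_iff, Set.mem_singleton_iff, exists_eq_left, isConj_iff]
  rintro _ ⟨s, rfl⟩ _ ⟨t, rfl⟩
  have h := (hc (s⁻¹ * t)).map (MulAut.conj s)
  simpa [mul_assoc] using h.eq)

end OddOrder

section Semiregular

variable {G : Type*} [Group G] [Finite G] [Group.IsNilpotent G]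

theorem stabilizer_eq_bot_of_forall_disjoint {X : Type*} [MulAction G X] (hG : Odd (Nat.card G))
    {x : X}
    (hdisj : ∀ B : Subgroup G, B.Normal → IsMulCommutative B → Disjoint B (stabilizer G x))
    {A : Subgroup G} [A.Normal] [IsCyclic A] (hA : centralizer (A : Set G) ≤ A) :
    stabilizer G x = ⊥ := by
  by_contra hne
  obtain ⟨r, hr, hrx⟩ := Nat.exists_prime_and_dvd (mt card_eq_one.mp hne)
  have : Fact r.Prime := ⟨hr⟩
  have hr2 : Odd r := hG.of_dvd_nat (hrx.trans (card_subgroup_dvd_card _))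
  obtain ⟨c, hc⟩ := exists_prime_orderOf_dvd_card' r hrx
  have hcr : (c : G) ^ r = 1 := by rw [← hc, ← orderOf_coe, pow_orderOf_eq_one]
  have hcomm := isMulCommutative_normalClosure_singleton
    (commute_conj_of_pow_prime_eq_one hA hr2 hcr)
  have hc1 : (c : G) = 1 := disjoint_def.mp (hdisj _ normalClosure_normal hcomm)
    (subset_normalClosure (Set.mem_singleton _)) c.2
  exact hr.ne_one (hc.symm.trans (orderOf_eq_one_iff.mpr (Subtype.ext hc1)))

theorem exists_card_stabilizer_pow_le_of_forall_disjoint [Nontrivial G] {H : Type*} [CommGroup H]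
    [Finite H] [Nontrivial H] [MulDistribMulAction G H] {p : ℕ} (hp : 2 ≤ p)
    (hpG : ∀ q : ℕ, q.Prime → q ∣ Nat.card G → p ≤ q)
    (hdisj : ∀ B : Subgroup G, B.Normal → IsMulCommutative B →
      ∀ x : H, x ≠ 1 → Disjoint B (stabilizer G x)) :
    ∃ x : H, p * Nat.card (stabilizer G x) ^ p ≤ Nat.card G := by
  obtain ⟨A, _, hA⟩ := exists_normal_centralizer_eq G
  have : IsMulCommutative A := le_centralizer_iff_isMulCommutative.mp hA.ge
  have : IsCyclic A := isCyclic_of_forall_smul_ne H fun a ha x hx hax =>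
    ha (Subtype.ext (disjoint_def.mp (hdisj A ‹_› ‹_› x hx) a.2 hax))
  obtain ⟨x, hx⟩ := exists_ne (1 : H)
  refine ⟨x, ?_⟩
  rcases Nat.even_or_odd (Nat.card G) with hG | hG
  · obtain rfl : p = 2 := le_antisymm (hpG 2 Nat.prime_two hG.two_dvd) hp
    exact two_mul_card_sq_le_of_disjoint hG hA.le (hdisj A ‹_› ‹_› x hx)
  · have hbot : stabilizer G x = ⊥ := stabilizer_eq_bot_of_forall_disjoint hG
      (fun B hB hBc => hdisj B hB hBc x hx) hA.le
    obtain ⟨q, hq, hqG⟩ := Nat.exists_prime_and_dvd (Finite.one_lt_card (α := G)).ne'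
    rw [hbot, card_bot, one_pow, mul_one]
    exact (hpG q hq hqG).trans (Nat.le_of_dvd Nat.card_pos hqG)

end Semiregular

section Reduction

theorem nontrivial_of_faithfulSMul (G α : Type*) [Monoid G] [Nontrivial G] [MulAction G α]
    [FaithfulSMul G α] : Nontrivial α := by
  by_contra h
  have := not_nontrivial_iff_subsingleton.mp h
  obtain ⟨g, hg⟩ := exists_ne (1 : G)
  exact hg (eq_of_smul_eq_smul fun x : α => Subsingleton.elim _ _)

theorem isInvariantSubgroup_of_characteristic (G : Type*) {H : Type*} [Group G] [Group H]
    [MulDistribMulAction G H] (K : Subgroup H) [K.Characteristic] : IsInvariantSubgroup G K where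
  smul_mem g x hx := characteristic_iff_map_le.mp ‹_› (MulDistribMulAction.toMulEquiv H g)
    (mem_map_of_mem _ hx)

variable {G : Type*} [Group G] [Finite G] [Nontrivial G] [Group.IsNilpotent G] {p : ℕ}

theorem exists_card_stabilizer_pow_le_of_irreducible {H : Type*} [CommGroup H] [Finite H]
    [MulDistribMulAction G H] [FaithfulSMul G H] (hp : 2 ≤ p)
    (hpG : ∀ q : ℕ, q.Prime → q ∣ Nat.card G → p ≤ q) (hco : (Nat.card G).Coprime (Nat.card H))
    (ih : ∀ K : Subgroup H, K ≠ ⊤ → HasSmallStabilizers p K)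
    (hirr : ∀ K : Subgroup H, IsInvariantSubgroup G K → K = ⊥ ∨ K = ⊤) :
    ∃ x : H, p * Nat.card (stabilizer G x) ^ p ≤ Nat.card G := by
  have : Nontrivial H := nontrivial_of_faithfulSMul G H
  by_cases hdisj : ∀ A : Subgroup G, A.Normal → IsMulCommutative A →
      ∀ x : H, x ≠ 1 → Disjoint A (stabilizer G x)
  · exact exists_card_stabilizer_pow_le_of_forall_disjoint hp hpG hdisj
  · simp only [disjoint_def] at hdisj
    push Not at hdisj
    obtain ⟨A, _, _, x, hx, a, haA, hax, ha⟩ := hdisj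
    exact exists_card_stabilizer_pow_le_of_smul_eq_self hp hpG hco ih hirr
      (fun b hb c hc => setLike_mul_comm hb hc) haA ha hx hax

theorem exists_card_stabilizer_pow_le_of_isPGroup {H : Type*} [Group H] [Finite H]
    [MulDistribMulAction G H] [FaithfulSMul G H] {q : ℕ} [Fact q.Prime] (hH : IsPGroup q H)
    (hp : 2 ≤ p) (hpG : ∀ q : ℕ, q.Prime → q ∣ Nat.card G → p ≤ q)
    (hco : (Nat.card G).Coprime (Nat.card H))
    (ih : ∀ K : Subgroup H, K ≠ ⊤ → HasSmallStabilizers p K)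
    (ihq : ∀ (K : Subgroup H) [K.Normal], K ≠ ⊥ → HasSmallStabilizers p (H ⧸ K)) :
    ∃ x : H, p * Nat.card (stabilizer G x) ^ p ≤ Nat.card G := by
  have hnormal : ∀ K : Subgroup H, K.Normal → IsInvariantSubgroup G K → K ≠ ⊥ → K ≠ ⊤ →
      ∃ x : H, p * Nat.card (stabilizer G x) ^ p ≤ Nat.card G := fun K _ _ hbot htop =>
    exists_card_stabilizer_pow_le_of_normal hp hpG hco K (ih K htop) (ihq K hbot)
  have : Nontrivial H := nontrivial_of_faithfulSMul G H
  by_cases hcenter : center H = ⊤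
  · let _ : CommGroup H :=
      { ‹Group H› with mul_comm := fun a b => mem_center_iff.mp (hcenter ▸ mem_top b) a }
    by_cases hirr : ∀ K : Subgroup H, IsInvariantSubgroup G K → K = ⊥ ∨ K = ⊤
    · exact exists_card_stabilizer_pow_le_of_irreducible hp hpG hco ih hirr
    · push Not at hirr
      obtain ⟨K, hK, hbot, htop⟩ := hirr
      exact hnormal K inferInstance hK hbot htop
  · have := hH.center_nontrivial
    exact hnormal (center H) inferInstance (isInvariantSubgroup_of_characteristic G _)
      ((nontrivial_iff_ne_bot _).mp this) hcenter

theorem hasSmallStabilizers (hp : 2 ≤ p) (H : Type*) [Group H] [Finite H] :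
    HasSmallStabilizers p H := by
  induction hn : Nat.card H using Nat.strong_induction_on generalizing H with
  | _ n ih =>
  have ihK : ∀ K : Subgroup H, K ≠ ⊤ → HasSmallStabilizers p K := fun K hK =>
    ih _ (hn ▸ K.card_le_card_group.lt_of_ne (mt K.eq_top_of_card_eq hK)) K rfl
  have ihq : ∀ (K : Subgroup H) [K.Normal], K ≠ ⊥ → HasSmallStabilizers p (H ⧸ K) :=
    fun K _ hK => ih _ (hn ▸ K.index_mul_card ▸ lt_mul_of_one_lt_right
      (Nat.pos_of_ne_zero FiniteIndex.index_ne_zero) (K.one_lt_card_iff_ne_bot.mpr hK)) _ rfl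
  intro Γ hΓ _ hpΓ hco
  have := (nontrivial_iff_ne_bot Γ).mpr hΓ
  by_cases hH : ∃ q : ℕ, q.Prime ∧ IsPGroup q H
  · obtain ⟨q, hq, hqH⟩ := hH
    have : Fact q.Prime := ⟨hq⟩
    exact exists_card_stabilizer_pow_le_of_isPGroup hqH hp hpΓ hco ihK ihq
  · refine exists_card_stabilizer_pow_le_of_sylow hp hpΓ hco fun q hq Q => ihK Q fun h => hH ?_
    exact ⟨q, hq.out, (h ▸ Q.isPGroup').of_equiv topEquiv⟩

end Reduction

theorem exists_small_centralizer_of_coprime_action_general {N H : Type*} [Group N] [Nontrivial N]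
    [Group.IsNilpotent N] [Group H] [Finite H] [MulDistribMulAction N H] [FaithfulSMul N H]
    (hco : (Nat.card N).Coprime (Nat.card H)) {p : ℕ} (hp : 2 ≤ p)
    (hpN : ∀ q : ℕ, q.Prime → q ∣ Nat.card N → p ≤ q) :
    ∃ x : H, (Nat.card (stabilizer N x) : ℝ) ≤ ((Nat.card N : ℝ) / p) ^ ((1 : ℝ) / p) := by
  obtain ⟨x, hx⟩ := (hasSmallStabilizers hp H).exists_card_stabilizer_pow_le hp hpN hco
  have hp0 : (0 : ℝ) < p := by positivity
  refine ⟨x, ?_⟩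
  rw [one_div, Real.le_rpow_inv_iff_of_pos (Nat.cast_nonneg _) (by positivity) hp0,
    Real.rpow_natCast, le_div_iff₀' hp0]
  exact_mod_cast hx

/-- Isaacs: if a nontrivial nilpotent `π`-group `N` acts faithfully by automorphisms on a
`π'`-group `H`, and `p` is the smallest member of `π`, then some `x ∈ H` has
`|C_N(x)| ≤ (|N|/p)^(1/p)`. -/
theorem exists_small_centralizer_of_coprime_action
    {N H : Type*} [Group N] [Finite N] [Group H] [Finite H]
    [MulDistribMulAction N H] (hfaithful : FaithfulSMul N H)
    (π : Set ℕ) (hπ : ∀ q ∈ π, Nat.Prime q)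
    (hN : Nontrivial N) (hNπ : ∀ q : ℕ, q.Prime → q ∣ Nat.card N → q ∈ π)
    (hHπ : ∀ q : ℕ, q.Prime → q ∣ Nat.card H → q ∉ π)
    (hnil : Group.IsNilpotent N)
    (p : ℕ) (hpπ : p ∈ π) (hpmin : ∀ q ∈ π, p ≤ q) :
    ∃ x : H, (Nat.card (MulAction.stabilizer N x) : ℝ) ≤
      ((Nat.card N : ℝ) / p) ^ ((1 : ℝ) / p) := by
  have hco : (Nat.card N).Coprime (Nat.card H) :=
    Nat.coprime_of_dvd fun q hq hN hH => hHπ q hq hH (hNπ q hq hN)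
  exact exists_small_centralizer_of_coprime_action_general hco (hπ p hpπ).two_le
    fun q hq hqN => hpmin q (hNπ q hq hqN)
end

section
/- Let G be a finite group with a normal r-subgroup N contained in the Frattini subgroup Φ(G), where r is a prime not in the prime set π. If O_π(G/N) > 1 then O_π(G) > 1. Consequently, if O_π(G) = 1 and Φ(G) > 1 contains a minimal normal r-subgroup N with r ∉ π, then O_π(G/N) = 1. -/
/-!
Since `N` is a finite normal subgroup contained in the Frattini subgroup, the Frattini argument
makes its Sylow subgroups normal, so `N` is nilpotent. Let `L` be the preimage in `G` of a normal
`π`-subgroup of `G ⧸ N`, so that `N` is a normal Hall subgroup of `L`. When `N` is abelian, its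
complements in `L` exist and are conjugate, so by the Frattini argument `G = N_G(H) N` for every
such complement `H`; as `N` consists of nongenerators, `H` is normal in `G`. For nilpotent `N`
one first finds a complement modulo the centre of `N`, by induction, and then splits off the
centre. The resulting complement of `N` in `L` is a normal `π`-subgroup of `G`.
-/

open Subgroup

section Complements

variable {M M' : Type*} [Group M] [Group M']

theorem isComplement'_map_mulEquiv {A B : Subgroup M} (h : IsComplement' A B) (e : M ≃* M') :
    IsComplement' (A.map e.toMonoidHom) (B.map e.toMonoidHom) := by
  refine isComplement'_of_disjoint_and_mul_eq_univ (disjoint_map e.injective h.disjoint) ?_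
  rw [coe_map, coe_map, ← Set.image_mul, h.mul_eq, Set.image_univ]
  exact e.surjective.range_eq

variable {A : Subgroup M} [A.Normal] [IsMulCommutative A]

theorem exists_stabilizer_quotientDiff_eq [A.FiniteIndex] (hA : (Nat.card A).Coprime A.index)
    {T : Subgroup M} (hT : IsComplement' A T) :
    ∃ α : A.QuotientDiff, MulAction.stabilizer M α = T := by
  let S : A.LeftTransversal := ⟨T, hT.symm⟩
  let α : A.QuotientDiff := Quotient.mk'' S
  have hTα : T ≤ MulAction.stabilizer M α := fun t ht =>
    congrArg Quotient.mk'' (Subtype.ext (op_smul_coe_set (T.inv_mem ht)) :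
      MulOpposite.op t⁻¹ • S = S)
  have hα : IsComplement' A (MulAction.stabilizer M α) := isComplement'_stabilizer_of_coprime hA
  have : Finite (MulAction.stabilizer M α) :=
    Nat.finite_of_card_ne_zero (hα.symm.index_eq_card ▸ FiniteIndex.index_ne_zero)
  refine ⟨α, (eq_of_le_of_card_ge hTα ?_).symm⟩
  rw [← hα.symm.index_eq_card, ← hT.symm.index_eq_card]

theorem exists_map_conj_eq_of_isComplement' (hA : (Nat.card A).Coprime A.index)
    {H K : Subgroup M} (hH : IsComplement' A H) (hK : IsComplement' A K) :
    ∃ a : A, H.map (MulAut.conj (a : M)).toMonoidHom = K := by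
  by_cases hfin : A.FiniteIndex
  · obtain ⟨α, rfl⟩ := exists_stabilizer_quotientDiff_eq hA hH
    obtain ⟨β, rfl⟩ := exists_stabilizer_quotientDiff_eq hA hK
    obtain ⟨a, rfl⟩ := exists_smul_eq hA α β
    exact ⟨a, (MulAction.stabilizer_smul_eq_stabilizer_map_conj (a : M) α).symm⟩
  · have hbot : A = ⊥ := by
      rwa [← card_eq_one, ← Nat.coprime_zero_right, ← not_finiteIndex_iff.mp hfin]
    subst hbot
    rw [isComplement'_bot_left] at hH hK
    exact ⟨1, by simp [hH, hK]⟩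

end Complements

section FrattiniSubgroup

variable {G : Type*} [Group G]

theorem eq_top_of_sup_eq_top_of_le_frattini {H N : Subgroup G} (hfg : N.FG)
    (hN : N ≤ frattini G) (h : H ⊔ N = ⊤) : H = ⊤ := by
  obtain ⟨S, rfl⟩ := hfg
  by_contra hH
  have hSH : ¬ (S : Set G) ⊆ H := fun hS =>
    hH (by rwa [sup_eq_left.mpr ((closure_le H).mpr hS)] at h)
  obtain ⟨K, hHK, hK⟩ : ∃ K, H ≤ K ∧ Maximal (fun K : Subgroup G => ¬ (S : Set G) ⊆ K) K := by
    refine zorn_le_nonempty₀ {K : Subgroup G | ¬ (S : Set G) ⊆ K}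
      (fun c hc hchain J hJ => ⟨sSup c, fun hS => ?_, fun _ => le_sSup⟩) H hSH
    have hScover : (S : Set G) ⊆ ⋃ K ∈ c, (K : Set G) := fun s hs => by
      simpa only [Set.mem_iUnion, exists_prop, SetLike.mem_coe] using
        (mem_sSup_of_directedOn ⟨J, hJ⟩ hchain.directedOn).mp (hS hs)
    obtain ⟨K, hKc, hSK⟩ :=
      DirectedOn.exists_mem_subset_of_finset_subset_biUnion ⟨J, hJ⟩ hchain.directedOn hScover
    exact hc hKc hSK
  have hcoatom : IsCoatom K := by
    refine ⟨fun hKtop => hK.prop (hKtop ▸ fun _ _ => mem_top _), fun J hKJ => ?_⟩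
    have hSJ : (S : Set G) ⊆ J := not_not.mp (hK.not_prop_of_gt hKJ)
    exact top_le_iff.mp (h.ge.trans (sup_le (hHK.trans hKJ.le) ((closure_le J).mpr hSJ)))
  exact hK.prop ((closure_le K).mp (hN.trans (frattini_le_coatom hcoatom)))

theorem normal_of_normalizer_sup_eq_top {H N : Subgroup G} (hfg : N.FG)
    (hN : N ≤ frattini G) (h : normalizer (H : Set G) ⊔ N = ⊤) : H.Normal :=
  normalizer_eq_top_iff.mp (eq_top_of_sup_eq_top_of_le_frattini hfg hN h)

theorem isNilpotent_of_le_frattini {N : Subgroup G} [N.Normal] [Finite N]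
    (hN : N ≤ frattini G) : Group.IsNilpotent N := by
  have sylow_normal (p : ℕ) (_ : Fact p.Prime) (P : Sylow p N) : (P : Subgroup N).Normal := by
    have hP : ((P : Subgroup N).map N.subtype).Normal :=
      normal_of_normalizer_sup_eq_top ((Group.fg_iff_subgroup_fg N).mp inferInstance) hN
        P.normalizer_sup_eq_top
    exact hP.of_map_subtype
  exact (Group.isNilpotent_of_finite_tfae.out 0 3).mpr sylow_normal

theorem normalizer_sup_eq_top_of_forall_exists_conj {L : Subgroup G} [L.Normal] {H : Subgroup L}
    (hconj : ∀ g : G, ∃ l : L,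
      (H.map (MulAut.conjNormal g).toMonoidHom).map (MulAut.conj l).toMonoidHom = H) :
    normalizer (H.map L.subtype : Set G) ⊔ L = ⊤ := by
  refine top_le_iff.mp fun g _ => ?_
  obtain ⟨l, hl⟩ := hconj g
  have hlg : (l : G) * g ∈ normalizer (H.map L.subtype : Set G) := by
    rw [mem_normalizer_iff_map_conj_eq]
    conv_rhs => rw [← hl]
    simp only [map_map]
    congr 1
    ext x
    simp [mul_assoc]
  rw [← inv_mul_cancel_left (l : G) g, sup_comm]
  exact mul_mem_sup (inv_mem l.2) hlg

theorem map_conjNormal_subgroupOf (N L : Subgroup G) [N.Normal] [L.Normal] (g : G) :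
    (N.subgroupOf L).map (MulAut.conjNormal g : L ≃* L).toMonoidHom = N.subgroupOf L := by
  ext x
  rw [mem_map_equiv, mem_subgroupOf, mem_subgroupOf, MulAut.conjNormal_symm_apply,
    ‹N.Normal›.mem_comm_iff, mul_inv_cancel_left]

theorem exists_normal_complement_of_le_frattini_of_isMulCommutative {N L : Subgroup G} [N.Normal]
    [L.Normal] [IsMulCommutative N] (hfg : N.FG) (hN : N ≤ frattini G) (hNL : N ≤ L)
    (hcop : (Nat.card N).Coprime (N.relIndex L)) :
    ∃ K : Subgroup G, K.Normal ∧ N ⊓ K = ⊥ ∧ N ⊔ K = L := by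
  have hcop' : (Nat.card (N.subgroupOf L)).Coprime (N.subgroupOf L).index := by
    rwa [Nat.card_congr (subgroupOfEquivOfLe hNL).toEquiv]
  obtain ⟨H, hH⟩ := exists_right_complement'_of_coprime hcop'
  have hmapN : (N.subgroupOf L).map L.subtype = N := map_subgroupOf_eq_of_le hNL
  have hinf : N ⊓ H.map L.subtype = ⊥ := by
    rw [← hmapN, ← map_inf_eq _ _ _ L.subtype_injective, hH.disjoint.eq_bot, Subgroup.map_bot]
  have hsup : N ⊔ H.map L.subtype = L := by
    rw [← hmapN, ← Subgroup.map_sup, hH.sup_eq_top, ← MonoidHom.range_eq_map, range_subtype]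
  have hnormalizer : normalizer (H.map L.subtype : Set G) ⊔ L = ⊤ := by
    refine normalizer_sup_eq_top_of_forall_exists_conj fun g => ?_
    have hHg := isComplement'_map_mulEquiv hH (MulAut.conjNormal g)
    rw [map_conjNormal_subgroupOf] at hHg
    obtain ⟨n, hn⟩ := exists_map_conj_eq_of_isComplement' hcop' hHg hH
    exact ⟨n, hn⟩
  refine ⟨H.map L.subtype, normal_of_normalizer_sup_eq_top hfg hN ?_, hinf, hsup⟩
  calc
    normalizer (H.map L.subtype : Set G) ⊔ N
      = normalizer (H.map L.subtype : Set G) ⊔ (N ⊔ H.map L.subtype) := by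
        rw [sup_comm N, ← sup_assoc, sup_eq_left.mpr le_normalizer]
    _ = ⊤ := by rw [hsup, hnormalizer]

theorem exists_normal_complement_of_map {G' : Type*} [Group G'] {f : G →* G'}
    (hf : Function.Surjective f) [IsMulCommutative f.ker] {N L : Subgroup G} [N.Normal] [Finite N]
    (hN : N ≤ frattini G) (hker : f.ker ≤ N) (hNL : N ≤ L)
    (hcop : (Nat.card N).Coprime (N.relIndex L)) {K : Subgroup G'} [K.Normal]
    (hinf : N.map f ⊓ K = ⊥) (hsup : N.map f ⊔ K = L.map f) :
    ∃ T : Subgroup G, T.Normal ∧ N ⊓ T = ⊥ ∧ N ⊔ T = L := by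
  have hNf : (N.map f).comap f = N := comap_map_eq_self hker
  have hLf : (L.map f).comap f = L := comap_map_eq_self (hker.trans hNL)
  have hinf' : N ⊓ K.comap f = f.ker := by
    rw [← hNf, ← comap_inf, hinf, MonoidHom.comap_bot]
  have hsup' : N ⊔ K.comap f = L := by
    rw [← hLf, ← hsup, ← comap_sup_eq f _ _ hf, hNf]
  have hrel : f.ker.relIndex (K.comap f) = N.relIndex L := by
    rw [← hinf', inf_relIndex_right, ← relIndex_sup_left, hsup']
  have : Finite f.ker := Finite.of_injective _ (inclusion_injective hker)
  obtain ⟨T, hT, hkerT, hkerT'⟩ := exists_normal_complement_of_le_frattini_of_isMulCommutative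
    ((Group.fg_iff_subgroup_fg f.ker).mp inferInstance) (hker.trans hN) (ker_le_comap f K)
    (hrel ▸ hcop.coprime_dvd_left (card_dvd_of_le hker))
  refine ⟨T, hT, ?_, ?_⟩
  · rw [← inf_eq_right.mpr (le_sup_right.trans hkerT'.le), ← inf_assoc, hinf', hkerT]
  · rw [← hsup', ← hkerT', ← sup_assoc, sup_eq_left.mpr hker]

theorem exists_normal_complement_of_le_frattini {N L : Subgroup G} [N.Normal] [L.Normal]
    [Finite N] (hN : N ≤ frattini G) (hNL : N ≤ L)
    (hcop : (Nat.card N).Coprime (N.relIndex L)) :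
    ∃ K : Subgroup G, K.Normal ∧ N ⊓ K = ⊥ ∧ N ⊔ K = L := by
  induction hcard : Nat.card N using Nat.strong_induction_on generalizing G with
  | _ n ih =>
  subst hcard
  obtain rfl | hbot := eq_or_ne N ⊥
  · exact ⟨L, ‹L.Normal›, bot_inf_eq L, bot_sup_eq L⟩
  have := (nontrivial_iff_ne_bot N).mpr hbot
  have := isNilpotent_of_le_frattini hN
  let Z : Subgroup G := (center N).map N.subtype
  have hZN : Z ≤ N := map_subtype_le _
  have hZcard : 1 < Nat.card Z := by
    rw [card_map_of_injective N.subtype_injective, one_lt_card_iff_ne_bot]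
    exact Group.IsNilpotent.center_ne_bot N
  let f := QuotientGroup.mk' Z
  have hf : Function.Surjective f := QuotientGroup.mk'_surjective Z
  have hker : f.ker = Z := QuotientGroup.ker_mk' Z
  have hcardmap : Nat.card Z * Nat.card (N.map f) = Nat.card N := by
    rw [← relIndex_ker N f, hker, ← relIndex_bot_left Z, ← relIndex_bot_left N,
      relIndex_mul_relIndex _ _ _ bot_le hZN]
  have hrel : (N.map f).relIndex (L.map f) = N.relIndex L := by
    rw [← relIndex_comap, comap_map_eq_self (hker.trans_le hZN)]
  have : IsMulCommutative f.ker := by rw [hker]; infer_instance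
  have : Finite (N.map f) := Set.Finite.to_subtype ((Set.toFinite (N : Set G)).image f)
  have := ‹N.Normal›.map f hf
  have := ‹L.Normal›.map f hf
  obtain ⟨K, hK, hinf, hsup⟩ := ih (Nat.card (N.map f))
    (hcardmap ▸ lt_mul_of_one_lt_left Nat.card_pos hZcard)
    (map_le_iff_le_comap.mpr (hN.trans (frattini_le_comap_frattini_of_surjective hf)))
    (map_mono hNL) (hrel ▸ hcop.coprime_dvd_left (N.card_map_dvd f)) rfl
  exact exists_normal_complement_of_map hf hN (hker.trans_le hZN) hNL hcop hinf hsup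

theorem relIndex_comap_mk' (N : Subgroup G) [N.Normal] (K : Subgroup (G ⧸ N)) :
    N.relIndex (K.comap (QuotientGroup.mk' N)) = Nat.card K := by
  rw [← map_comap_eq_self_of_surjective (QuotientGroup.mk'_surjective N) K, ← relIndex_ker,
    QuotientGroup.ker_mk', map_comap_eq_self_of_surjective (QuotientGroup.mk'_surjective N)]

theorem Oπ_quotient_trivial_of_frattini_general (π : Set ℕ) (N : Subgroup G) [N.Normal] [Finite N]
    (hNπ : ∀ q : ℕ, q.Prime → q ∣ Nat.card N → q ∉ π) (hN : N ≤ frattini G)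
    (hOπ : ∀ K : Subgroup G, K.Normal →
      (∀ q : ℕ, q.Prime → q ∣ Nat.card K → q ∈ π) → K = ⊥) :
    ∀ K : Subgroup (G ⧸ N), K.Normal →
      (∀ q : ℕ, q.Prime → q ∣ Nat.card K → q ∈ π) → K = ⊥ := by
  intro K hK hKπ
  have hrel : N.relIndex (K.comap (QuotientGroup.mk' N)) = Nat.card K := relIndex_comap_mk' N K
  have hcop : (Nat.card N).Coprime (Nat.card K) :=
    Nat.coprime_of_dvd fun q hq hqN hqK => hNπ q hq hqN (hKπ q hq hqK)
  obtain ⟨H, hH, hinf, hsup⟩ := exists_normal_complement_of_le_frattini hN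
    (QuotientGroup.le_comap_mk' N K) (hrel.symm ▸ hcop)
  have hcard : Nat.card H = Nat.card K := by
    rw [← hrel, ← hsup, relIndex_sup_left, ← inf_relIndex_right, hinf, relIndex_bot_left]
  rw [← card_eq_one, ← hcard, card_eq_one]
  exact hOπ H hH (hcard ▸ hKπ)

end FrattiniSubgroup

/-- Let `N` be a normal `r`-subgroup of the finite group `G` contained in the Frattini
subgroup, where `r` is a prime not in `π`. If `O_π(G) = 1` then `O_π(G/N) = 1`
(equivalently, if `O_π(G/N) > 1` then `O_π(G) > 1`). -/
theorem Oπ_quotient_trivial_of_frattini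
    (G : Type*) [Group G] [Finite G] (π : Set ℕ) (hπ : ∀ q ∈ π, Nat.Prime q)
    (r : ℕ) (hr : r.Prime) (hrπ : r ∉ π)
    (N : Subgroup G) [N.Normal] (hNr : IsPGroup r N) (hNfr : N ≤ frattini G)
    (hOπ : ∀ K : Subgroup G, K.Normal →
      (∀ q : ℕ, q.Prime → q ∣ Nat.card K → q ∈ π) → K = ⊥) :
    ∀ K : Subgroup (G ⧸ N), K.Normal →
      (∀ q : ℕ, q.Prime → q ∣ Nat.card K → q ∈ π) → K = ⊥ := by
  have hN : ∀ q : ℕ, q.Prime → q ∣ Nat.card N → q ∉ π := fun q hq hqN => by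
    obtain ⟨n, hn⟩ := hNr.exists_card_dvd_pow
    rwa [(Nat.prime_dvd_prime_iff_eq hq hr).mp (hq.dvd_of_dvd_pow (hqN.trans hn))]
  exact Oπ_quotient_trivial_of_frattini_general π N hN hNfr hOπ
end
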